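/- arXiv:0904.2414 — 2 statements merged into one kernel-verified Lean document; each statement's English description precedes it below -/
import Mathlib

section
/- For 10 ≤ N ≤ 16, the pull-in voltage of (P)_λ on the unit ball satisfies λ* ≤ λ'_N, where λ'_{10} = 450, λ'_{11} = 560, λ'_{12} = 680, λ'_{13} = 802, λ'_{14} = 940, λ'_{15} = 1100, and λ'_{16} = 1260. -/
open MeasureTheory Metric Set Filter

/-- The Laplacian of `u : ℝ^N → ℝ`, as the sum of pure second partial derivatives. -/
noncomputable def lap {N : ℕ} (u : EuclideanSpace ℝ (Fin N) → ℝ) (x : EuclideanSpace ℝ (Fin N)) : ℝ :=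
  ∑ i : Fin N, fderiv ℝ (fun y => fderiv ℝ u y (EuclideanSpace.single i 1)) x
    (EuclideanSpace.single i 1)

/-- The biharmonic operator `Δ²`. -/
noncomputable def biharm {N : ℕ} (u : EuclideanSpace ℝ (Fin N) → ℝ)
    (x : EuclideanSpace ℝ (Fin N)) : ℝ :=
  lap (lap u) x

/-- A classical solution of `(P)_λ` on the unit ball `B ⊆ ℝ^N`:
`u ∈ C⁴(B̄)`, `0 < u < 1` in `B`, `Δ²u = λ (1-u)⁻²` in `B`, and `u = 0`, `∂_ν u = 0` on `∂B`. -/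
structure IsClassicalSolution (N : ℕ) (lam : ℝ) (u : EuclideanSpace ℝ (Fin N) → ℝ) : Prop where
  contDiffOn : ContDiffOn ℝ 4 u (closedBall (0 : EuclideanSpace ℝ (Fin N)) 1)
  pos : ∀ x ∈ ball (0 : EuclideanSpace ℝ (Fin N)) 1, 0 < u x
  lt_one : ∀ x ∈ ball (0 : EuclideanSpace ℝ (Fin N)) 1, u x < 1
  eqn : ∀ x ∈ ball (0 : EuclideanSpace ℝ (Fin N)) 1, biharm u x = lam / (1 - u x) ^ 2
  bdry : ∀ x : EuclideanSpace ℝ (Fin N), ‖x‖ = 1 → u x = 0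
  bdry_deriv : ∀ x : EuclideanSpace ℝ (Fin N), ‖x‖ = 1 →
    fderivWithin ℝ u (closedBall (0 : EuclideanSpace ℝ (Fin N)) 1) x x = 0

/-- The set of voltages `λ > 0` for which `(P)_λ` admits a classical solution;
the pull-in voltage `λ*` is its supremum. -/
def solSet (N : ℕ) : Set ℝ := {lam | 0 < lam ∧ ∃ u, IsClassicalSolution N lam u}

/-- `λ̄_N = (8/9)(N - 2/3)(N - 8/3)`. -/
noncomputable def lamBar (N : ℕ) : ℝ := (8 / 9) * ((N : ℝ) - 2 / 3) * ((N : ℝ) - 8 / 3)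

/-- The explicit upper bounds λ'_N for 10 ≤ N ≤ 16. -/
def lamPrime : ℕ → ℝ
  | 10 => 450
  | 11 => 560
  | 12 => 680
  | 13 => 802
  | 14 => 940
  | 15 => 1100
  | 16 => 1260
  | _ => 0

noncomputable section

/-- The punctured open unit ball. -/
def pball (N : ℕ) : Set (EuclideanSpace ℝ (Fin N)) := ball 0 1 \ {0}

lemma pball_isOpen (N : ℕ) : IsOpen (pball N) := isOpen_ball.sdiff isClosed_singleton

lemma pball_mem {N : ℕ} {x : EuclideanSpace ℝ (Fin N)} :
    x ∈ pball N ↔ 0 < ‖x‖ ∧ ‖x‖ < 1 := by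
  simp [pball, norm_pos_iff, and_comm]

lemma st_bound : ∃ K : ℝ, 0 ≤ K ∧ ∀ y, |(y + 1) * deriv Real.smoothTransition y| ≤ K := by
  have hc : Continuous (deriv Real.smoothTransition) :=
    (Real.smoothTransition.contDiff (n := 1)).continuous_deriv le_rfl
  have hc2 : Continuous (fun y => |(y + 1) * deriv Real.smoothTransition y|) := by fun_prop
  obtain ⟨K, hK⟩ := (isCompact_Icc (a := (0:ℝ)) (b := 1)).bddAbove_image hc2.continuousOn
  refine ⟨max K 0, le_max_right _ _, fun y => ?_⟩
  by_cases hy : y ∈ Icc (0:ℝ) 1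
  · exact (hK ⟨y, hy, rfl⟩).trans (le_max_left _ _)
  · have : deriv Real.smoothTransition y = 0 := by
      rw [mem_Icc, not_and_or, not_le, not_le] at hy
      rcases hy with hy | hy
      · have : Real.smoothTransition =ᶠ[nhds y] fun _ => 0 := by
          filter_upwards [Iio_mem_nhds hy] with z hz
          exact Real.smoothTransition.zero_of_nonpos (le_of_lt hz)
        rw [this.deriv_eq]; simp
      · have : Real.smoothTransition =ᶠ[nhds y] fun _ => 1 := by
          filter_upwards [Ioi_mem_nhds hy] with z hz
          exact Real.smoothTransition.one_of_one_le (le_of_lt hz)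
        rw [this.deriv_eq]; simp
    simp [this]

lemma st_deriv_zero {y : ℝ} (hy : 1 < y) : deriv Real.smoothTransition y = 0 := by
  have : Real.smoothTransition =ᶠ[nhds y] fun _ => 1 := by
    filter_upwards [Ioi_mem_nhds hy] with z hz
    exact Real.smoothTransition.one_of_one_le (le_of_lt hz)
  rw [this.deriv_eq]; simp

/-- cutoff functions -/
def cut {N : ℕ} (n : ℝ) (x : EuclideanSpace ℝ (Fin N)) : ℝ :=
  Real.smoothTransition (n * (1 - ‖x‖ ^ 2) - 1) * Real.smoothTransition (n * ‖x‖ ^ 2 - 1)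

def cutD {N : ℕ} (n : ℝ) (x : EuclideanSpace ℝ (Fin N)) : ℝ :=
  - (deriv Real.smoothTransition (n * (1 - ‖x‖ ^ 2) - 1) * Real.smoothTransition (n * ‖x‖ ^ 2 - 1))
  + Real.smoothTransition (n * (1 - ‖x‖ ^ 2) - 1) * deriv Real.smoothTransition (n * ‖x‖ ^ 2 - 1)

lemma cut_contDiff {N : ℕ} (n : ℝ) : ContDiff ℝ 1 (cut (N := N) n) := by
  have h : ContDiff ℝ 1 Real.smoothTransition := Real.smoothTransition.contDiff (n := 1)
  have h2 : ContDiff ℝ 1 (fun x : EuclideanSpace ℝ (Fin N) => ‖x‖ ^ 2) := contDiff_norm_sq ℝ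
  unfold cut
  exact (h.comp ((contDiff_const.mul (contDiff_const.sub h2)).sub contDiff_const)).mul
    (h.comp ((contDiff_const.mul h2).sub contDiff_const))

lemma cut_fderiv {N : ℕ} (n : ℝ) (x : EuclideanSpace ℝ (Fin N)) (i : Fin N) :
    fderiv ℝ (cut n) x (EuclideanSpace.single i 1) = 2 * n * x i * cutD n x := by
  have h : Differentiable ℝ Real.smoothTransition :=
    (Real.smoothTransition.contDiff (n := 1)).differentiable (by norm_num)
  have h2 : HasFDerivAt (fun x : EuclideanSpace ℝ (Fin N) => ‖x‖ ^ 2) (2 • innerSL ℝ x) x :=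
    (hasStrictFDerivAt_norm_sq x).hasFDerivAt
  have e1 := ((h (n * (1 - ‖x‖ ^ 2) - 1)).hasDerivAt.comp_hasFDerivAt x
    (((h2.const_sub 1).const_mul n).sub_const 1))
  have e2 := ((h (n * ‖x‖ ^ 2 - 1)).hasDerivAt.comp_hasFDerivAt x
    ((h2.const_mul n).sub_const 1))
  have e3 := (e1.mul e2).fderiv
  have e4 : cut n = ((Real.smoothTransition ∘ fun x : EuclideanSpace ℝ (Fin N) => n * (1 - ‖x‖ ^ 2) - 1) * (Real.smoothTransition ∘ fun x : EuclideanSpace ℝ (Fin N) => n * ‖x‖ ^ 2 - 1)) := by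
    ext y; simp [cut]
  rw [e4, e3]
  simp [cutD, EuclideanSpace.inner_single_right]
  ring

lemma cut_zero_nhds {N : ℕ} {n : ℝ} (hn : 1 ≤ n) {x : EuclideanSpace ℝ (Fin N)}
    (hx : x ∉ pball N) : cut n =ᶠ[nhds x] fun _ => 0 := by
  have hc : Continuous (fun x : EuclideanSpace ℝ (Fin N) => ‖x‖ ^ 2) := by fun_prop
  rw [pball_mem, not_and_or, not_lt, not_lt] at hx
  rcases hx with hx | hx
  · have h0 : ‖x‖ = 0 := le_antisymm hx (norm_nonneg _)
    have : ∀ᶠ y in nhds x, n * ‖y‖ ^ 2 - 1 < 0 := by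
      apply (show Continuous (fun y : EuclideanSpace ℝ (Fin N) => n * ‖y‖ ^ 2 - 1) by fun_prop).tendsto x |>.eventually_lt_const
      simp [h0]
    filter_upwards [this] with y hy
    simp [cut, Real.smoothTransition.zero_of_nonpos hy.le]
  · have : ∀ᶠ y in nhds x, n * (1 - ‖y‖ ^ 2) - 1 < 0 := by
      apply (show Continuous (fun y : EuclideanSpace ℝ (Fin N) => n * (1 - ‖y‖ ^ 2) - 1) by fun_prop).tendsto x |>.eventually_lt_const
      have : 1 ≤ ‖x‖ ^ 2 := one_le_pow₀ hx
      have : n * (1 - ‖x‖ ^ 2) ≤ 0 := mul_nonpos_of_nonneg_of_nonpos (by linarith) (by linarith)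
      linarith
    filter_upwards [this] with y hy
    simp [cut, Real.smoothTransition.zero_of_nonpos hy.le]

lemma cut_mul_contDiff {N : ℕ} {n : ℝ} (hn : 1 ≤ n) {f : EuclideanSpace ℝ (Fin N) → ℝ}
    (hf : ContDiffOn ℝ 1 f (pball N)) : ContDiff ℝ 1 (fun x => cut n x * f x) := by
  rw [contDiff_iff_contDiffAt]
  intro x
  by_cases hx : x ∈ pball N
  · exact (cut_contDiff n).contDiffAt.mul (hf.contDiffAt ((pball_isOpen N).mem_nhds hx))
  · have : (fun x => cut n x * f x) =ᶠ[nhds x] fun _ => 0 := by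
      filter_upwards [cut_zero_nhds hn hx] with y hy
      simp [hy]
    exact contDiffAt_const.congr_of_eventuallyEq this

lemma cut_mul_compact {N : ℕ} {n : ℝ} (hn : 1 ≤ n) {f : EuclideanSpace ℝ (Fin N) → ℝ} :
    HasCompactSupport (fun x => cut n x * f x) := by
  refine HasCompactSupport.intro (isCompact_closedBall (0 : EuclideanSpace ℝ (Fin N)) 1) ?_
  intro x hx
  have : x ∉ pball N := by
    rw [pball_mem]; simp at hx; intro h; linarith [h.2]
  rw [(cut_zero_nhds hn this).eq_of_nhds]; simp

lemma cut_mul_integral {N : ℕ} {n : ℝ} (hn : 1 ≤ n) {f : EuclideanSpace ℝ (Fin N) → ℝ}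
    (hf : ContDiffOn ℝ 1 f (pball N)) (v : EuclideanSpace ℝ (Fin N)) :
    Integrable (fun x => fderiv ℝ (fun x => cut n x * f x) x v) ∧
    ∫ x, fderiv ℝ (fun x => cut n x * f x) x v = 0 := by
  have h1 := cut_mul_contDiff hn hf
  have h2 := cut_mul_compact hn (f := f)
  have hcf : Continuous (fun x => fderiv ℝ (fun x => cut n x * f x) x v) :=
    (h1.continuous_fderiv (by norm_num)).clm_apply continuous_const
  have hI : Integrable (fun x => fderiv ℝ (fun x => cut n x * f x) x v) := by
    apply hcf.integrable_of_hasCompactSupport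
    exact h2.fderiv_apply (𝕜 := ℝ) v
  refine ⟨hI, ?_⟩
  have := integral_mul_fderiv_eq_neg_fderiv_mul_of_integrable (μ := (volume : Measure (EuclideanSpace ℝ (Fin N))))
    (f := fun _ => (1:ℝ)) (g := fun x => cut n x * f x) (v := v) (by simp) (by simpa using hI)
    (by simpa using h1.continuous.integrable_of_hasCompactSupport h2)
    (fun x _ => by fun_prop) (fun x _ => (h1.differentiable (by norm_num)) x)
  simpa using this

/-- Divergence theorem for fields on the punctured ball with decaying normal flux. -/
lemma pball_div_zero {N : ℕ} (F : Fin N → EuclideanSpace ℝ (Fin N) → ℝ)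
    (hF : ∀ i, ContDiffOn ℝ 1 (F i) (pball N))
    (g : EuclideanSpace ℝ (Fin N) → ℝ) (hg : IntegrableOn g (pball N))
    (hflux : ∀ x ∈ pball N, |∑ i, x i * F i x| ≤ (1 - ‖x‖ ^ 2) * ‖x‖ ^ 2 * g x)
    (d : EuclideanSpace ℝ (Fin N) → ℝ)
    (hd : ∀ x ∈ pball N, d x = ∑ i, fderiv ℝ (F i) x (EuclideanSpace.single i 1))
    (hdi : IntegrableOn d (pball N)) :
    ∫ x in pball N, d x = 0 := by
  obtain ⟨K, hK0, hK⟩ := st_bound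
  set G : ℕ → EuclideanSpace ℝ (Fin N) → ℝ := fun n x =>
    ∑ i, fderiv ℝ (fun x => cut (n+1) x * F i x) x (EuclideanSpace.single i 1) with hG
  have hn1 : ∀ n : ℕ, (1:ℝ) ≤ n + 1 := fun n => by have := n.cast_nonneg (α := ℝ); linarith
  have hGint : ∀ n, Integrable (G n) := fun n =>
    integrable_finset_sum _ fun i _ => (cut_mul_integral (hn1 n) (hF i) _).1
  have hG0 : ∀ n, ∫ x in pball N, G n x = 0 := by
    intro n
    rw [setIntegral_eq_integral_of_forall_compl_eq_zero]
    · rw [integral_finset_sum _ fun i _ => (cut_mul_integral (hn1 n) (hF i) _).1]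
      exact Finset.sum_eq_zero fun i _ => (cut_mul_integral (hn1 n) (hF i) _).2
    · intro x hx
      refine Finset.sum_eq_zero fun i _ => ?_
      have : (fun x => cut ((n:ℝ)+1) x * F i x) =ᶠ[nhds x] fun _ => 0 := by
        filter_upwards [cut_zero_nhds (hn1 n) hx] with y hy
        simp [hy]
      rw [this.fderiv_eq]; simp
  have hGeq : ∀ n : ℕ, ∀ x ∈ pball N, G n x = cut ((n:ℝ)+1) x * d x +
      2 * ((n:ℝ)+1) * cutD ((n:ℝ)+1) x * ∑ i, x i * F i x := by
    intro n x hx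
    rw [hd x hx, Finset.mul_sum, Finset.mul_sum, ← Finset.sum_add_distrib]
    refine Finset.sum_congr rfl fun i _ => ?_
    have hdf : DifferentiableAt ℝ (F i) x :=
      ((hF i).contDiffAt ((pball_isOpen N).mem_nhds hx)).differentiableAt (by norm_num)
    have hdc : DifferentiableAt ℝ (cut ((n:ℝ)+1)) x :=
      (cut_contDiff _).differentiable (by norm_num) x
    rw [fderiv_fun_mul hdc hdf]
    simp [cut_fderiv]
    ring
  have hlim : Tendsto (fun n => ∫ x in pball N, G n x) atTop (nhds (∫ x in pball N, d x)) := by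
    apply tendsto_integral_of_dominated_convergence (fun x => |d x| + 4 * K * g x)
    · exact fun n => (hGint n).aestronglyMeasurable.restrict
    · exact hdi.abs.add (hg.const_mul _)
    · intro n
      filter_upwards [ae_restrict_mem (pball_isOpen N).measurableSet] with x hx
      rw [hGeq n x hx, Real.norm_eq_abs]
      obtain ⟨hx0, hx1⟩ := pball_mem.1 hx
      have hs0 : 0 < ‖x‖ ^ 2 := by positivity
      have hs1 : 0 < 1 - ‖x‖ ^ 2 := by nlinarith
      have hb := hflux x hx
      have hc : |cut ((n:ℝ)+1) x| ≤ 1 := by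
        rw [cut, abs_of_nonneg (mul_nonneg (Real.smoothTransition.nonneg _) (Real.smoothTransition.nonneg _))]
        exact mul_le_one₀ (Real.smoothTransition.le_one _) (Real.smoothTransition.nonneg _) (Real.smoothTransition.le_one _)
      have k1 := hK (((n:ℝ)+1) * (1 - ‖x‖ ^ 2) - 1)
      have k2 := hK (((n:ℝ)+1) * ‖x‖ ^ 2 - 1)
      rw [sub_add_cancel] at k1 k2
      have hg0 : 0 ≤ g x := by
        have : 0 ≤ ((1 - ‖x‖ ^ 2) * ‖x‖ ^ 2) * g x := (abs_nonneg _).trans hb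
        exact nonneg_of_mul_nonneg_right this (by positivity)
      set s := ‖x‖ ^ 2
      set A := ∑ i, x i * F i x
      have hD : |((n:ℝ)+1) * cutD ((n:ℝ)+1) x * ((1 - s) * s)| ≤ 2 * K := by
        have e : ((n:ℝ)+1) * cutD ((n:ℝ)+1) x * ((1 - s) * s) =
          -((((n:ℝ)+1) * (1 - s) * deriv Real.smoothTransition (((n:ℝ)+1) * (1 - s) - 1)) * (Real.smoothTransition (((n:ℝ)+1) * s - 1) * s)) +
          (((n:ℝ)+1) * s * deriv Real.smoothTransition (((n:ℝ)+1) * s - 1)) * (Real.smoothTransition (((n:ℝ)+1) * (1 - s) - 1) * (1 - s)) := by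
          simp only [cutD]; ring
        rw [e]
        refine (abs_add_le _ _).trans ?_
        rw [abs_neg, abs_mul, abs_mul (((n:ℝ)+1) * s * _)]
        have a1 : |Real.smoothTransition (((n:ℝ)+1) * s - 1) * s| ≤ 1 := by
          rw [abs_of_nonneg (mul_nonneg (Real.smoothTransition.nonneg _) hs0.le)]
          exact mul_le_one₀ (Real.smoothTransition.le_one _) hs0.le (by linarith)
        have a2 : |Real.smoothTransition (((n:ℝ)+1) * (1 - s) - 1) * (1 - s)| ≤ 1 := by
          rw [abs_of_nonneg (mul_nonneg (Real.smoothTransition.nonneg _) hs1.le)]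
          exact mul_le_one₀ (Real.smoothTransition.le_one _) hs1.le (by linarith)
        have b1 := mul_le_mul k1 a1 (abs_nonneg _) hK0
        have b2 := mul_le_mul k2 a2 (abs_nonneg _) hK0
        linarith
      refine (abs_add_le _ _).trans (add_le_add ?_ ?_)
      · rw [abs_mul]; exact mul_le_of_le_one_left (abs_nonneg _) hc
      · have e : |2 * ((n:ℝ)+1) * cutD ((n:ℝ)+1) x * A| ≤ 2 * |((n:ℝ)+1) * cutD ((n:ℝ)+1) x| * ((1 - s) * s * g x) := by
          rw [mul_assoc 2, mul_assoc 2, abs_mul, abs_mul (_ * _) A, abs_two, mul_assoc]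
          gcongr
        refine e.trans ?_
        rw [abs_mul, abs_of_pos (mul_pos hs1 hs0)] at hD
        calc _ = 2 * (|((n:ℝ)+1) * cutD ((n:ℝ)+1) x| * ((1 - s) * s)) * g x := by ring
          _ ≤ 2 * (2 * K) * g x := by gcongr
          _ = _ := by ring
    · filter_upwards [ae_restrict_mem (pball_isOpen N).measurableSet] with x hx
      obtain ⟨hx0, hx1⟩ := pball_mem.1 hx
      have hs0 : 0 < ‖x‖ ^ 2 := by positivity
      have hs1 : 0 < 1 - ‖x‖ ^ 2 := by nlinarith
      apply tendsto_const_nhds.congr'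
      have t1 : Tendsto (fun n : ℕ => ((n:ℝ)+1)) atTop atTop := tendsto_atTop_add_const_right _ _ tendsto_natCast_atTop_atTop
      filter_upwards [(t1.atTop_mul_const hs0).eventually_gt_atTop 2, (t1.atTop_mul_const hs1).eventually_gt_atTop 2] with n h1 h2
      rw [hGeq n x hx]
      have c1 : cut ((n:ℝ)+1) x = 1 := by
        rw [cut, Real.smoothTransition.one_of_one_le (by linarith), Real.smoothTransition.one_of_one_le (by linarith), one_mul]
      have c2 : cutD ((n:ℝ)+1) x = 0 := by
        rw [cutD, st_deriv_zero (by linarith), st_deriv_zero (by linarith)]; ring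
      rw [c1, c2]; ring
  simp only [hG0] at hlim
  exact tendsto_nhds_unique hlim tendsto_const_nhds

end

noncomputable section

lemma sum_coord_fderiv {N : ℕ} (L : EuclideanSpace ℝ (Fin N) →L[ℝ] ℝ) (x : EuclideanSpace ℝ (Fin N)) :
    ∑ i, x i * L (EuclideanSpace.single i 1) = L x := by
  conv_rhs => rw [← (EuclideanSpace.basisFun (Fin N) ℝ).sum_repr x]
  simp

lemma fderiv_apply_contDiffOn {N : ℕ} {U : Set (EuclideanSpace ℝ (Fin N))} (hU : IsOpen U)
    {f : EuclideanSpace ℝ (Fin N) → ℝ} {m n : WithTop ℕ∞} (hf : ContDiffOn ℝ n f U) (h : m + 1 ≤ n)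
    (v : EuclideanSpace ℝ (Fin N)) : ContDiffOn ℝ m (fun x => fderiv ℝ f x v) U :=
  (hf.fderiv_of_isOpen hU h).clm_apply contDiffOn_const

lemma green {N : ℕ} {v w : EuclideanSpace ℝ (Fin N) → ℝ}
    (hv : ContDiffOn ℝ 2 v (pball N)) (hw : ContDiffOn ℝ 2 w (pball N))
    (g : EuclideanSpace ℝ (Fin N) → ℝ) (hg : IntegrableOn g (pball N))
    (hflux : ∀ x ∈ pball N, |v x * fderiv ℝ w x x - w x * fderiv ℝ v x x|
      ≤ (1 - ‖x‖ ^ 2) * ‖x‖ ^ 2 * g x)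
    (hi : IntegrableOn (fun x => v x * lap w x - w x * lap v x) (pball N)) :
    ∫ x in pball N, (v x * lap w x - w x * lap v x) = 0 := by
  have hU := pball_isOpen N
  have h12 : (1 : WithTop ℕ∞) ≤ 2 := by norm_num
  have hv1 := fun i : Fin N => fderiv_apply_contDiffOn hU hv (m := 1) (by norm_num) (EuclideanSpace.single i 1)
  have hw1 := fun i : Fin N => fderiv_apply_contDiffOn hU hw (m := 1) (by norm_num) (EuclideanSpace.single i 1)
  apply pball_div_zero (fun i x => v x * fderiv ℝ w x (EuclideanSpace.single i 1) -
    w x * fderiv ℝ v x (EuclideanSpace.single i 1)) _ g hg _ _ _ hi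
  · intro i
    exact ((hv.of_le h12).mul (hw1 i)).sub ((hw.of_le h12).mul (hv1 i))
  · intro x hx
    convert hflux x hx using 2
    rw [← sum_coord_fderiv (fderiv ℝ w x), ← sum_coord_fderiv (fderiv ℝ v x), Finset.mul_sum, Finset.mul_sum,
      ← Finset.sum_sub_distrib]
    exact Finset.sum_congr rfl fun i _ => by ring
  · intro x hx
    have hn := hU.mem_nhds hx
    rw [lap, lap, Finset.mul_sum, Finset.mul_sum, ← Finset.sum_sub_distrib]
    refine Finset.sum_congr rfl fun i _ => ?_
    have dv : DifferentiableAt ℝ v x := (hv.contDiffAt hn).differentiableAt (by norm_num)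
    have dw : DifferentiableAt ℝ w x := (hw.contDiffAt hn).differentiableAt (by norm_num)
    have dv1 := ((hv1 i).contDiffAt hn).differentiableAt (by norm_num)
    have dw1 := ((hw1 i).contDiffAt hn).differentiableAt (by norm_num)
    rw [fderiv_fun_sub (dv.fun_mul dw1) (dw.fun_mul dv1), fderiv_fun_mul dv dw1, fderiv_fun_mul dw dv1]
    simp
    ring

/-! radial power sums -/

lemma norm_rpow_contDiffAt {N : ℕ} (e : ℝ) {x : EuclideanSpace ℝ (Fin N)} (hx : x ≠ 0) {n : WithTop ℕ∞} :
    ContDiffAt ℝ n (fun x : EuclideanSpace ℝ (Fin N) => ‖x‖ ^ e) x :=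
  (contDiffAt_norm ℝ hx).rpow_const_of_ne (norm_ne_zero_iff.2 hx)

lemma norm_rpow_fderiv {N : ℕ} (e : ℝ) {x : EuclideanSpace ℝ (Fin N)} (hx : x ≠ 0)
    (v : EuclideanSpace ℝ (Fin N)) :
    fderiv ℝ (fun x : EuclideanSpace ℝ (Fin N) => ‖x‖ ^ e) x v = e * ‖x‖ ^ (e - 2) * inner ℝ x v := by
  have h2 : HasFDerivAt (fun x : EuclideanSpace ℝ (Fin N) => ‖x‖ ^ 2) (2 • innerSL ℝ x) x :=
    (hasStrictFDerivAt_norm_sq x).hasFDerivAt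
  have hp : 0 < ‖x‖ := norm_pos_iff.2 hx
  have h3 := h2.rpow_const (p := e / 2) (Or.inl (by positivity))
  have e1 : ∀ (y : ℝ), 0 ≤ y → ∀ p : ℝ, (y ^ 2) ^ p = y ^ (2 * p) := by
    intro y hy p
    rw [← Real.rpow_natCast, ← Real.rpow_mul hy]; norm_num
  have e2 : (fun x : EuclideanSpace ℝ (Fin N) => (‖x‖ ^ 2) ^ (e/2)) = fun x => ‖x‖ ^ e := by
    ext y; rw [e1 _ (norm_nonneg _)]; congr 1; ring
  rw [e2] at h3
  rw [h3.fderiv, e1 _ hp.le, show 2 * (e / 2 - 1) = e - 2 by ring]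
  simp
  ring

def rad {N : ℕ} (a : ℕ → ℝ) (e : ℝ) (n : ℕ) (x : EuclideanSpace ℝ (Fin N)) : ℝ :=
  ∑ k ∈ Finset.range n, a k * ‖x‖ ^ (e + k)

lemma rad_contDiffAt {N : ℕ} (a : ℕ → ℝ) (e : ℝ) (n : ℕ) {x : EuclideanSpace ℝ (Fin N)} (hx : x ≠ 0) {m : WithTop ℕ∞} :
    ContDiffAt ℝ m (rad (N := N) a e n) x := by
  unfold rad
  exact ContDiffAt.sum fun k _ => contDiffAt_const.mul (norm_rpow_contDiffAt _ hx)

lemma rad_fderiv {N : ℕ} (a : ℕ → ℝ) (e : ℝ) (n : ℕ) {x : EuclideanSpace ℝ (Fin N)} (hx : x ≠ 0)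
    (v : EuclideanSpace ℝ (Fin N)) :
    fderiv ℝ (rad (N := N) a e n) x v = rad (fun k => a k * (e + k)) (e - 2) n x * inner ℝ x v := by
  unfold rad
  rw [fderiv_fun_sum fun k _ => ((norm_rpow_contDiffAt (n := 1) _ hx).differentiableAt (by norm_num)).const_mul _]
  rw [sum_apply, Finset.sum_mul]
  refine Finset.sum_congr rfl fun k _ => ?_
  rw [fderiv_const_mul ((norm_rpow_contDiffAt (n := 1) _ hx).differentiableAt (by norm_num))]
  simp only [smul_apply, smul_eq_mul]
  rw [norm_rpow_fderiv _ hx, show e + (k:ℝ) - 2 = e - 2 + k by ring]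
  ring

lemma rad_mul {N : ℕ} (a : ℕ → ℝ) (e c : ℝ) (n : ℕ) {x : EuclideanSpace ℝ (Fin N)} (hx : x ≠ 0) :
    rad a e n x * ‖x‖ ^ c = rad a (e + c) n x := by
  unfold rad
  rw [Finset.sum_mul]
  refine Finset.sum_congr rfl fun k _ => ?_
  rw [mul_assoc, ← Real.rpow_add (norm_pos_iff.2 hx)]
  congr 2; ring

lemma rad_fderiv_self {N : ℕ} (a : ℕ → ℝ) (e : ℝ) (n : ℕ) {x : EuclideanSpace ℝ (Fin N)} (hx : x ≠ 0) :
    fderiv ℝ (rad (N := N) a e n) x x = rad (fun k => a k * (e + k)) e n x := by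
  rw [rad_fderiv _ _ _ hx, real_inner_self_eq_norm_sq]
  have := rad_mul (fun k => a k * (e + k)) (e - 2) 2 n hx
  rw [sub_add_cancel] at this
  rw [← this]; norm_num

lemma rad_lap {N : ℕ} (a : ℕ → ℝ) (e : ℝ) (n : ℕ) {x : EuclideanSpace ℝ (Fin N)} (hx : x ≠ 0) :
    lap (rad (N := N) a e n) x = rad (fun k => a k * ((e + k) * (e + k + N - 2))) (e - 2) n x := by
  have h1 : ∀ i : Fin N, fderiv ℝ (fun y => fderiv ℝ (rad (N := N) a e n) y (EuclideanSpace.single i 1)) x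
      (EuclideanSpace.single i 1) =
      rad (fun k => a k * (e + k)) (e - 2) n x +
      rad (fun k => a k * (e + k) * (e - 2 + k)) (e - 2 - 2) n x * (x i) ^ 2 := by
    intro i
    have : (fun y => fderiv ℝ (rad (N := N) a e n) y (EuclideanSpace.single i 1)) =ᶠ[nhds x]
        fun y => rad (fun k => a k * (e + k)) (e - 2) n y * y i := by
      filter_upwards [isOpen_ne.mem_nhds hx] with y hy
      rw [rad_fderiv _ _ _ hy]; simp [EuclideanSpace.inner_single_right]
    rw [this.fderiv_eq]
    have hp : HasFDerivAt (fun y : EuclideanSpace ℝ (Fin N) => y i) (EuclideanSpace.proj i : EuclideanSpace ℝ (Fin N) →L[ℝ] ℝ) x :=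
      (EuclideanSpace.proj i : EuclideanSpace ℝ (Fin N) →L[ℝ] ℝ).hasFDerivAt
    rw [fderiv_fun_mul ((rad_contDiffAt (m := 1) _ _ _ hx).differentiableAt (by norm_num)) hp.differentiableAt, hp.fderiv]
    simp only [add_apply, smul_apply, smul_eq_mul]
    rw [rad_fderiv _ _ _ hx]
    simp [EuclideanSpace.inner_single_right]
    ring
  rw [lap, Finset.sum_congr rfl fun i _ => h1 i, Finset.sum_add_distrib, ← Finset.mul_sum,
    ← EuclideanSpace.real_norm_sq_eq]
  have := rad_mul (fun k => a k * (e + k) * (e - 2 + k)) (e - 2 - 2) 2 n hx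
  rw [sub_add_cancel] at this
  rw [show ‖x‖ ^ 2 = ‖x‖ ^ (2:ℝ) by norm_num, this]
  simp only [rad, Finset.sum_const, Finset.card_univ, Fintype.card_fin, nsmul_eq_mul]
  rw [Finset.mul_sum, ← Finset.sum_add_distrib]
  exact Finset.sum_congr rfl fun k _ => by ring

lemma rad_bound {N : ℕ} (a : ℕ → ℝ) (e : ℝ) (n : ℕ) : ∃ C : ℝ, 0 ≤ C ∧ ∀ x ∈ pball N,
    |rad a e n x| ≤ C * ‖x‖ ^ e := by
  refine ⟨∑ k ∈ Finset.range n, |a k|, Finset.sum_nonneg fun _ _ => abs_nonneg _, fun x hx => ?_⟩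
  obtain ⟨h0, h1⟩ := pball_mem.1 hx
  rw [rad, Finset.sum_mul]
  refine (Finset.abs_sum_le_sum_abs _ _).trans (Finset.sum_le_sum fun k _ => ?_)
  rw [abs_mul, abs_of_pos (Real.rpow_pos_of_pos h0 _)]
  refine mul_le_mul_of_nonneg_left ?_ (abs_nonneg _)
  exact Real.rpow_le_rpow_of_exponent_ge h0 h1.le (le_add_of_nonneg_right k.cast_nonneg)

lemma rad_bound_zero {N : ℕ} (a : ℕ → ℝ) (e : ℝ) (n : ℕ) (ha : ∑ k ∈ Finset.range n, a k = 0) :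
    ∃ C : ℝ, 0 ≤ C ∧ ∀ x ∈ pball N, |rad a e n x| ≤ C * (1 - ‖x‖ ^ 2) * ‖x‖ ^ e := by
  refine ⟨∑ k ∈ Finset.range n, |a k| * k, Finset.sum_nonneg fun _ _ => by positivity, fun x hx => ?_⟩
  obtain ⟨h0, h1⟩ := pball_mem.1 hx
  have e1 : rad a e n x = (∑ k ∈ Finset.range n, a k * (‖x‖ ^ k - 1)) * ‖x‖ ^ e := by
    simp only [mul_sub, mul_one, Finset.sum_sub_distrib, ha, sub_zero]
    rw [rad, Finset.sum_mul]
    refine Finset.sum_congr rfl fun k _ => ?_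
    rw [Real.rpow_add h0, Real.rpow_natCast]; ring
  rw [e1, abs_mul, abs_of_pos (Real.rpow_pos_of_pos h0 _)]
  gcongr
  rw [Finset.sum_mul]
  refine (Finset.abs_sum_le_sum_abs _ _).trans (Finset.sum_le_sum fun k _ => ?_)
  rw [abs_mul, mul_assoc]
  gcongr
  have hb := one_add_mul_le_pow (a := ‖x‖ - 1) (by linarith) k
  have hp : ‖x‖ ^ k ≤ 1 := pow_le_one₀ h0.le h1.le
  rw [abs_of_nonpos (by linarith)]
  have : (k:ℝ) * (1 - ‖x‖) ≤ k * (1 - ‖x‖ ^ 2) := by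
    gcongr; nlinarith
  rw [add_sub_cancel] at hb
  linarith

end

noncomputable section

/-- The closed unit ball. -/
abbrev cball (N : ℕ) : Set (EuclideanSpace ℝ (Fin N)) := closedBall 0 1

lemma cball_unique (N : ℕ) : UniqueDiffOn ℝ (cball N) :=
  uniqueDiffOn_convex (convex_closedBall _ _)
    ((nonempty_ball.2 one_pos).mono ball_subset_interior_closedBall)

lemma cball_nhds {N : ℕ} {x : EuclideanSpace ℝ (Fin N)} (hx : x ∈ ball (0 : EuclideanSpace ℝ (Fin N)) 1) :
    cball N ∈ nhds x :=
  mem_of_superset (isOpen_ball.mem_nhds hx) ball_subset_closedBall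

lemma fdw_contDiffOn {N : ℕ} {f : EuclideanSpace ℝ (Fin N) → ℝ} {m n : WithTop ℕ∞}
    (hf : ContDiffOn ℝ n f (cball N)) (h : m + 1 ≤ n) (v : EuclideanSpace ℝ (Fin N)) :
    ContDiffOn ℝ m (fun x => fderivWithin ℝ f (cball N) x v) (cball N) :=
  (hf.fderivWithin (cball_unique N) h).clm_apply contDiffOn_const

lemma fdw_self_contDiffOn {N : ℕ} {f : EuclideanSpace ℝ (Fin N) → ℝ} {m n : WithTop ℕ∞}
    (hf : ContDiffOn ℝ n f (cball N)) (h : m + 1 ≤ n) :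
    ContDiffOn ℝ m (fun x => fderivWithin ℝ f (cball N) x x) (cball N) :=
  (hf.fderivWithin (cball_unique N) h).clm_apply contDiffOn_id

/-- The Laplacian computed with derivatives within the closed ball. -/
def lapW {N : ℕ} (u : EuclideanSpace ℝ (Fin N) → ℝ) (x : EuclideanSpace ℝ (Fin N)) : ℝ :=
  ∑ i : Fin N, fderivWithin ℝ (fun y => fderivWithin ℝ u (cball N) y (EuclideanSpace.single i 1)) (cball N) x
    (EuclideanSpace.single i 1)

lemma lapW_contDiffOn {N : ℕ} {f : EuclideanSpace ℝ (Fin N) → ℝ} {k m n : WithTop ℕ∞}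
    (hf : ContDiffOn ℝ n f (cball N)) (h : m + 1 ≤ n) (h2 : k + 1 ≤ m) :
    ContDiffOn ℝ k (lapW f) (cball N) := by
  unfold lapW
  exact ContDiffOn.sum fun i _ => fdw_contDiffOn (fdw_contDiffOn hf h _) h2 _

lemma fdw_eq {N : ℕ} {f g : EuclideanSpace ℝ (Fin N) → ℝ}
    (hfg : EqOn f g (ball 0 1)) {x : EuclideanSpace ℝ (Fin N)}
    (hx : x ∈ ball (0 : EuclideanSpace ℝ (Fin N)) 1) :
    fderiv ℝ f x = fderivWithin ℝ g (cball N) x := by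
  rw [fderivWithin_of_mem_nhds (cball_nhds hx)]
  exact (hfg.eventuallyEq_of_mem (isOpen_ball.mem_nhds hx)).fderiv_eq

lemma lap_eq {N : ℕ} {f g : EuclideanSpace ℝ (Fin N) → ℝ} (hfg : EqOn f g (ball 0 1)) :
    EqOn (lap f) (lapW g) (ball 0 1) := by
  intro x hx
  refine Finset.sum_congr rfl fun i _ => ?_
  rw [fdw_eq (g := fun y => fderivWithin ℝ g (cball N) y (EuclideanSpace.single i 1)) _ hx]
  intro y hy
  simp only
  rw [fdw_eq hfg hy]

lemma cball_bound {N : ℕ} {f : EuclideanSpace ℝ (Fin N) → ℝ} (hf : ContinuousOn f (cball N)) :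
    ∃ C : ℝ, 0 ≤ C ∧ ∀ x ∈ cball N, |f x| ≤ C := by
  obtain ⟨C, hC⟩ := (isCompact_closedBall (0 : EuclideanSpace ℝ (Fin N)) 1).exists_bound_of_continuousOn hf
  exact ⟨max C 0, le_max_right _ _, fun x hx => (hC x hx).trans (le_max_left _ _)⟩

lemma cball_bdry_bound {N : ℕ} {f : EuclideanSpace ℝ (Fin N) → ℝ} (hf : ContDiffOn ℝ 1 f (cball N))
    (h0 : ∀ x : EuclideanSpace ℝ (Fin N), ‖x‖ = 1 → f x = 0) :
    ∃ C : ℝ, 0 ≤ C ∧ ∀ x ∈ pball N, |f x| ≤ C * (1 - ‖x‖ ^ 2) := by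
  have hc : ContinuousOn (fderivWithin ℝ f (cball N)) (cball N) :=
    hf.continuousOn_fderivWithin (cball_unique N) le_rfl
  obtain ⟨C, hC⟩ := (isCompact_closedBall (0 : EuclideanSpace ℝ (Fin N)) 1).exists_bound_of_continuousOn hc
  refine ⟨max C 0, le_max_right _ _, fun x hx => ?_⟩
  obtain ⟨hx0, hx1⟩ := pball_mem.1 hx
  set y := ‖x‖⁻¹ • x with hy
  have hy1 : ‖y‖ = 1 := by
    rw [hy, norm_smul, norm_inv, norm_norm, inv_mul_cancel₀ hx0.ne']
  have hd : ‖x - y‖ = 1 - ‖x‖ := by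
    have : x - y = -((‖x‖⁻¹ - 1) • x) := by rw [hy, sub_smul, one_smul]; abel
    have h1 : 0 ≤ ‖x‖⁻¹ - 1 := by
      have := (one_le_inv₀ hx0).2 hx1.le
      linarith
    rw [this, norm_neg, norm_smul, Real.norm_of_nonneg h1, sub_mul, inv_mul_cancel₀ hx0.ne', one_mul]
  have := (convex_closedBall (0 : EuclideanSpace ℝ (Fin N)) 1).norm_image_sub_le_of_norm_fderivWithin_le
    (hf.differentiableOn (by norm_num)) hC (x := y) (y := x) (by simp [hy1]) (by simpa using hx1.le)
  rw [h0 y hy1, sub_zero, hd, Real.norm_eq_abs] at this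
  refine this.trans ?_
  have h2 : 1 - ‖x‖ ≤ 1 - ‖x‖ ^ 2 := by nlinarith
  exact mul_le_mul (le_max_left _ _) h2 (by linarith) (le_max_right _ _)

lemma pball_sub {N : ℕ} {x : EuclideanSpace ℝ (Fin N)} (hx : x ∈ pball N) :
    x ∈ ball (0 : EuclideanSpace ℝ (Fin N)) 1 := hx.1

lemma pball_subc {N : ℕ} : pball N ⊆ cball N := fun _ hx => ball_subset_closedBall hx.1

lemma sol_bounds {N : ℕ} {lam : ℝ} {u : EuclideanSpace ℝ (Fin N) → ℝ} (h : IsClassicalSolution N lam u) :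
    ContDiffOn ℝ 2 u (pball N) ∧ ContDiffOn ℝ 2 (lap u) (pball N) ∧ ContinuousOn (biharm u) (pball N) ∧
    ∃ C : ℝ, 0 ≤ C ∧ ∀ x ∈ pball N, |u x| ≤ C * (1 - ‖x‖ ^ 2) ∧ |fderiv ℝ u x x| ≤ C * (1 - ‖x‖ ^ 2) ∧
      |lap u x| ≤ C ∧ |fderiv ℝ (lap u) x x| ≤ C ∧ |biharm u x| ≤ C := by
  have e0 : EqOn u u (ball 0 1) := fun _ _ => rfl
  have e1 := lap_eq e0
  have e2 := lap_eq e1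
  have c0 := h.contDiffOn
  have c1 : ContDiffOn ℝ 2 (lapW u) (cball N) :=
    lapW_contDiffOn c0 (m := 3) (by norm_num) (by norm_num)
  have c2 : ContDiffOn ℝ 0 (lapW (lapW u)) (cball N) :=
    lapW_contDiffOn c1 (m := 1) (by norm_num) (by norm_num)
  have d0 : ContDiffOn ℝ 1 (fun x => fderivWithin ℝ u (cball N) x x) (cball N) :=
    fdw_self_contDiffOn c0 (by norm_num)
  have d1 : ContDiffOn ℝ 1 (fun x => fderivWithin ℝ (lapW u) (cball N) x x) (cball N) :=
    fdw_self_contDiffOn c1 (by norm_num)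
  obtain ⟨C1, p1, b1⟩ := cball_bdry_bound (c0.of_le (by norm_num)) h.bdry
  obtain ⟨C2, p2, b2⟩ := cball_bdry_bound d0 h.bdry_deriv
  obtain ⟨C3, p3, b3⟩ := cball_bound c1.continuousOn
  obtain ⟨C4, p4, b4⟩ := cball_bound d1.continuousOn
  obtain ⟨C5, p5, b5⟩ := cball_bound c2.continuousOn
  refine ⟨(c0.of_le (by norm_num)).mono pball_subc, (c1.mono pball_subc).congr fun x hx => e1 hx.1,
    (c2.continuousOn.mono pball_subc).congr fun x hx => e2 hx.1, C1 + C2 + C3 + C4 + C5, by positivity, ?_⟩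
  intro x hx
  obtain ⟨hx0, hx1⟩ := pball_mem.1 hx
  have hs1 : 0 < 1 - ‖x‖ ^ 2 := by nlinarith
  refine ⟨(b1 x hx).trans ?_, ?_, ?_, ?_, ?_⟩
  · gcongr; linarith
  · rw [fdw_eq e0 hx.1]; refine (b2 x hx).trans ?_; gcongr; linarith
  · rw [e1 hx.1]; linarith [b3 x (pball_subc hx)]
  · rw [fdw_eq e1 hx.1]; linarith [b4 x (pball_subc hx)]
  · rw [biharm, e2 hx.1]; linarith [b5 x (pball_subc hx)]

end

noncomputable section

lemma es_nontrivial {N : ℕ} (hN : 0 < N) : Nontrivial (EuclideanSpace ℝ (Fin N)) := by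
  refine ⟨⟨EuclideanSpace.single ⟨0, hN⟩ 1, 0, fun h => ?_⟩⟩
  have : ‖(EuclideanSpace.single (⟨0, hN⟩ : Fin N) (1:ℝ))‖ = 0 := by rw [h, norm_zero]
  simp at this

/-- Surface measure constant. -/
def surf (N : ℕ) : ℝ := N * (volume : Measure (EuclideanSpace ℝ (Fin N))).real (ball 0 1)

lemma surf_pos {N : ℕ} (hN : 0 < N) : 0 < surf N := by
  have h1 : 0 < (volume : Measure (EuclideanSpace ℝ (Fin N))) (ball 0 1) := measure_ball_pos _ _ one_pos
  have h2 : (volume : Measure (EuclideanSpace ℝ (Fin N))) (ball 0 1) < ⊤ := measure_ball_lt_top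
  exact mul_pos (by exact_mod_cast hN) (ENNReal.toReal_pos h1.ne' h2.ne)

lemma pow_rpow_aux {N : ℕ} (hN : 0 < N) (s : ℝ) {y : ℝ} (hy : 0 < y) :
    y ^ (N - 1) * y ^ s = y ^ (s + N - 1) := by
  rw [← Real.rpow_natCast, ← Real.rpow_add hy]
  congr 1
  rw [Nat.cast_sub hN]; push_cast; ring

lemma norm_rpow_integrable {N : ℕ} (hN : 0 < N) {s : ℝ} (hs : 0 < s + N) :
    IntegrableOn (fun x : EuclideanSpace ℝ (Fin N) => ‖x‖ ^ s) (pball N) := by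
  have := es_nontrivial hN
  refine IntegrableOn.mono_set ?_ (sdiff_subset : pball N ⊆ ball 0 1)
  rw [integrableOn_fun_norm_addHaar volume (f := fun r : ℝ => r ^ s)]
  have h := (intervalIntegral.integrableOn_Ioo_rpow_iff (s := s + N - 1) one_pos).2 (by linarith)
  refine h.congr_fun (fun y hy => ?_) measurableSet_Ioo
  simp only [finrank_euclideanSpace_fin, smul_eq_mul]
  exact (pow_rpow_aux hN s hy.1).symm

lemma norm_rpow_integral {N : ℕ} (hN : 0 < N) {s : ℝ} (hs : 0 < s + N) :
    ∫ x in pball N, ‖x‖ ^ s = surf N * (1 / (s + N)) := by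
  have := es_nontrivial hN
  have e1 : ∫ x in pball N, ‖x‖ ^ s =
      ∫ x : EuclideanSpace ℝ (Fin N), (Ioo (0:ℝ) 1).indicator (fun r => r ^ s) ‖x‖ := by
    rw [← integral_indicator (pball_isOpen N).measurableSet]
    congr 1
    ext x
    by_cases hx : x ∈ pball N
    · rw [indicator_of_mem hx, indicator_of_mem (show ‖x‖ ∈ Ioo (0:ℝ) 1 from pball_mem.1 hx)]
    · rw [indicator_of_notMem hx, indicator_of_notMem (show ‖x‖ ∉ Ioo (0:ℝ) 1 from fun h => hx (pball_mem.2 h))]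
  have e2 : ∫ y in Ioi (0:ℝ), y ^ (N - 1) * (Ioo (0:ℝ) 1).indicator (fun r => r ^ s) y = 1 / (s + N) := by
    have : ∫ y in Ioi (0:ℝ), y ^ (N - 1) * (Ioo (0:ℝ) 1).indicator (fun r => r ^ s) y =
        ∫ y in Ioi (0:ℝ), (Ioo (0:ℝ) 1).indicator (fun r => r ^ (s + N - 1)) y := by
      refine setIntegral_congr_fun measurableSet_Ioi fun y hy => ?_
      by_cases h : y ∈ Ioo (0:ℝ) 1
      · simp only [indicator_of_mem h]; exact pow_rpow_aux hN s hy
      · simp only [indicator_of_notMem h, mul_zero]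
    rw [this, setIntegral_indicator measurableSet_Ioo, inter_eq_self_of_subset_right (fun y hy => hy.1),
      ← integral_Ioc_eq_integral_Ioo, ← intervalIntegral.integral_of_le zero_le_one,
      integral_rpow (Or.inl (by linarith))]
    rw [sub_add_cancel, Real.one_rpow, Real.zero_rpow hs.ne', sub_zero]
  rw [e1, integral_fun_norm_addHaar volume]
  simp only [finrank_euclideanSpace_fin, smul_eq_mul, nsmul_eq_mul]
  rw [e2, surf]; ring

lemma rad_integral {N : ℕ} (hN : 0 < N) (b : ℕ → ℝ) (e : ℝ) (n : ℕ) (he : 0 < e + N) :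
    IntegrableOn (rad (N := N) b e n) (pball N) ∧
    ∫ x in pball N, rad (N := N) b e n x = surf N * ∑ k ∈ Finset.range n, b k / (e + N + k) := by
  have h : ∀ k : ℕ, 0 < e + k + N := fun k => by have := k.cast_nonneg (α := ℝ); linarith
  have hi : ∀ k ∈ Finset.range n, IntegrableOn (fun x : EuclideanSpace ℝ (Fin N) => b k * ‖x‖ ^ (e + k)) (pball N) :=
    fun k _ => (norm_rpow_integrable hN (h k)).const_mul _
  unfold rad
  refine ⟨integrable_finsetSum _ hi, ?_⟩
  rw [integral_finsetSum _ hi, Finset.mul_sum]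
  refine Finset.sum_congr rfl fun k _ => ?_
  rw [integral_const_mul, norm_rpow_integral hN (h k), show e + N + k = e + k + N by ring]
  ring

lemma pball_integrable {N : ℕ} (hN : 0 < N) {f : EuclideanSpace ℝ (Fin N) → ℝ} {C e : ℝ} (he : 0 < e + N)
    (hf : ContinuousOn f (pball N)) (hb : ∀ x ∈ pball N, |f x| ≤ C * ‖x‖ ^ e) : IntegrableOn f (pball N) := by
  refine Integrable.mono' ((norm_rpow_integrable hN he).const_mul C)
    (hf.aestronglyMeasurable (pball_isOpen N).measurableSet) ?_
  filter_upwards [ae_restrict_mem (pball_isOpen N).measurableSet] with x hx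
  exact hb x hx

lemma rad_eq {N : ℕ} (b : ℕ → ℝ) (e : ℝ) (n : ℕ) {x : EuclideanSpace ℝ (Fin N)} (hx : 0 < ‖x‖) :
    rad b e n x = ‖x‖ ^ e * ∑ k ∈ Finset.range n, b k * ‖x‖ ^ k := by
  rw [rad, Finset.mul_sum]
  refine Finset.sum_congr rfl fun k _ => ?_
  rw [Real.rpow_add hx, Real.rpow_natCast]; ring

lemma rpow_le_aux {r s t : ℝ} (h0 : 0 < r) (h1 : r < 1) (h : s ≤ t) : r ^ t ≤ r ^ s :=
  Real.rpow_le_rpow_of_exponent_ge h0 h1.le h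

/-- The dual certificate bound. -/
theorem certificate {N : ℕ} (hN : 0 < N) (n n2 : ℕ) (a q c : ℕ → ℝ) (τ : ℝ → ℝ) (L e : ℝ)
    (he : e = 14 / 3 - N)
    (hQ : ∀ r : ℝ, 0 < r → r < 1 → 0 ≤ ∑ k ∈ Finset.range n, q k * r ^ k)
    (hτ : ∀ r : ℝ, 0 < r → r < 1 → 0 ≤ τ r)
    (hP : ∀ r : ℝ, 0 < r → r < 1 → τ r ^ 3 * ∑ k ∈ Finset.range n, q k * r ^ k ≤
      ∑ k ∈ Finset.range n, a k * r ^ k)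
    (hL : ∀ r : ℝ, 0 < r → r < 1 → ∑ k ∈ Finset.range n,
      a k * ((e + k) * (e + k + N - 2)) * ((e - 2 + k) * (e - 2 + k + N - 2)) * r ^ k ≤
      2 * L * ∑ k ∈ Finset.range n, q k * r ^ k)
    (ha0 : ∑ k ∈ Finset.range n, a k = 0)
    (ha1 : ∑ k ∈ Finset.range n, a k * k = 0)
    (hc : ∀ r : ℝ, 0 < r → r < 1 → τ r * ∑ k ∈ Finset.range n, q k * r ^ k =
      ∑ k ∈ Finset.range n2, c k * r ^ k)
    (hobj : 0 < 3 * ∑ k ∈ Finset.range n2, c k / (2 + k) - 2 * ∑ k ∈ Finset.range n, q k / (2 / 3 + k))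
    {lam : ℝ} (hlam : 0 < lam) {u : EuclideanSpace ℝ (Fin N) → ℝ} (h : IsClassicalSolution N lam u) :
    lam ≤ L := by
  obtain ⟨cu, clu, cbu, C, hC0, hC⟩ := sol_bounds h
  have hU := pball_isOpen N
  set a1 : ℕ → ℝ := fun k => a k * ((e + k) * (e + k + N - 2)) with ha1d
  set a2 : ℕ → ℝ := fun k => a1 k * ((e - 2 + k) * (e - 2 + k + N - 2)) with ha2d
  have hne : ∀ x ∈ pball N, x ≠ 0 := fun x hx => norm_pos_iff.1 (pball_mem.1 hx).1
  have crad : ∀ (b : ℕ → ℝ) (e : ℝ) (n : ℕ), ContDiffOn ℝ 2 (rad (N := N) b e n) (pball N) :=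
    fun b e n x hx => (rad_contDiffAt b e n (hne x hx)).contDiffWithinAt
  have lapφ : ∀ x ∈ pball N, lap (rad a e n) x = rad a1 (e - 2) n x := fun x hx => rad_lap a e n (hne x hx)
  have lapw : ∀ x ∈ pball N, lap (rad a1 (e - 2) n) x = rad a2 (e - 2 - 2) n x :=
    fun x hx => rad_lap a1 (e - 2) n (hne x hx)
  have hκ : 0 < e - 2 - 2 + N := by rw [he]; ring_nf; norm_num
  -- bounds
  obtain ⟨K1, k1, B1⟩ := rad_bound (N := N) a1 (e - 2) n
  obtain ⟨K2, k2, B2⟩ := rad_bound (N := N) a2 (e - 2 - 2) n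
  obtain ⟨K3, k3, B3⟩ := rad_bound (N := N) (fun k => a1 k * (e - 2 + k)) (e - 2) n
  obtain ⟨K4, k4, B4⟩ := rad_bound_zero (N := N) a e n ha0
  obtain ⟨K5, k5, B5⟩ := rad_bound_zero (N := N) (fun k => a k * (e + k)) e n (by
    simp only [mul_add, Finset.sum_add_distrib, ← Finset.sum_mul, ha0, ha1]; simp)
  have hs : ∀ x ∈ pball N, 0 < 1 - ‖x‖ ^ 2 ∧ 1 - ‖x‖ ^ 2 ≤ 1 := by
    intro x hx
    obtain ⟨h0, h1⟩ := pball_mem.1 hx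
    constructor <;> nlinarith
  have hr2 : ∀ x ∈ pball N, ‖x‖ ^ 2 * ‖x‖ ^ (e - 2 - 2) = ‖x‖ ^ (e - 2) := by
    intro x hx
    rw [← Real.rpow_natCast, ← Real.rpow_add (pball_mem.1 hx).1]; congr 1; push_cast; ring
  have hp : ∀ x ∈ pball N, ∀ s : ℝ, 0 < ‖x‖ ^ s := fun x hx s => Real.rpow_pos_of_pos (pball_mem.1 hx).1 s
  have hm1 : ∀ x ∈ pball N, ‖x‖ ^ (e - 2) ≤ ‖x‖ ^ (e - 2 - 2) := fun x hx =>
    rpow_le_aux (pball_mem.1 hx).1 (pball_mem.1 hx).2 (by linarith)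
  have hm2 : ∀ x ∈ pball N, ‖x‖ ^ e ≤ ‖x‖ ^ (e - 2) := fun x hx =>
    rpow_le_aux (pball_mem.1 hx).1 (pball_mem.1 hx).2 (by linarith)
  -- integrability
  have I1 : IntegrableOn (fun x => u x * rad a2 (e - 2 - 2) n x) (pball N) := by
    refine pball_integrable hN (C := C * K2) hκ (cu.continuousOn.mul (crad _ _ _).continuousOn) fun x hx => ?_
    rw [abs_mul, mul_assoc]
    have := (hC x hx).1
    have h2 : C * (1 - ‖x‖ ^ 2) ≤ C := mul_le_of_le_one_right hC0 (hs x hx).2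
    exact mul_le_mul (this.trans h2) (B2 x hx) (abs_nonneg _) hC0
  have I2 : IntegrableOn (fun x => rad a1 (e - 2) n x * lap u x) (pball N) := by
    refine pball_integrable hN (C := K1 * C) hκ ((crad _ _ _).continuousOn.mul clu.continuousOn) fun x hx => ?_
    rw [abs_mul]
    have h2 : K1 * ‖x‖ ^ (e - 2) ≤ K1 * ‖x‖ ^ (e - 2 - 2) := mul_le_mul_of_nonneg_left (hm1 x hx) k1
    have := mul_le_mul ((B1 x hx).trans h2) (hC x hx).2.2.1 (abs_nonneg _)
      (mul_nonneg k1 (hp x hx _).le)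
    linarith
  have I3 : IntegrableOn (fun x => rad a e n x * biharm u x) (pball N) := by
    refine pball_integrable hN (C := K4 * C) hκ ((crad _ _ _).continuousOn.mul cbu) fun x hx => ?_
    rw [abs_mul]
    have h2 : K4 * (1 - ‖x‖ ^ 2) * ‖x‖ ^ e ≤ K4 * ‖x‖ ^ (e - 2 - 2) :=
      mul_le_mul (mul_le_of_le_one_right k4 (hs x hx).2) ((hm2 x hx).trans (hm1 x hx)) (hp x hx _).le k4
    have := mul_le_mul ((B4 x hx).trans h2) (hC x hx).2.2.2.2 (abs_nonneg _)
      (mul_nonneg k4 (hp x hx _).le)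
    linarith
  -- Green identities
  have G1 : ∫ x in pball N, (u x * rad a2 (e - 2 - 2) n x - rad a1 (e - 2) n x * lap u x) = 0 := by
    have hh : ∀ x ∈ pball N, u x * rad a2 (e - 2 - 2) n x - rad a1 (e - 2) n x * lap u x =
        u x * lap (rad a1 (e - 2) n) x - rad a1 (e - 2) n x * lap u x := fun x hx => by rw [lapw x hx]
    rw [setIntegral_congr_fun hU.measurableSet hh]
    refine green cu (crad _ _ _) (fun x => (C * K3 + K1 * C) * ‖x‖ ^ (e - 2 - 2))
      ((norm_rpow_integrable hN hκ).const_mul _) ?_ ((I1.sub I2).congr_fun hh hU.measurableSet)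
    intro x hx
    obtain ⟨b1, b2, -⟩ := hC x hx
    rw [rad_fderiv_self _ _ _ (hne x hx)]
    have hs1 := (hs x hx).1
    have hp1 := hp x hx (e - 2)
    have t1 := mul_le_mul b1 (B3 x hx) (abs_nonneg _) (mul_nonneg hC0 hs1.le)
    have t2 := mul_le_mul (B1 x hx) b2 (abs_nonneg _) (mul_nonneg k1 hp1.le)
    rw [← abs_mul] at t1 t2
    refine (abs_sub _ _).trans ((add_le_add t1 t2).trans (le_of_eq ?_))
    rw [← hr2 x hx]; ring
  have G2 : ∫ x in pball N, (rad a e n x * biharm u x - rad a1 (e - 2) n x * lap u x) = 0 := by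
    have hh : ∀ x ∈ pball N, rad a e n x * biharm u x - rad a1 (e - 2) n x * lap u x =
        rad a e n x * lap (lap u) x - lap u x * lap (rad a e n) x := fun x hx => by
      rw [lapφ x hx, biharm]; ring
    rw [setIntegral_congr_fun hU.measurableSet hh]
    refine green (crad _ _ _) clu (fun x => (K4 * C + C * K5) * ‖x‖ ^ (e - 2 - 2))
      ((norm_rpow_integrable hN hκ).const_mul _) ?_ ((I3.sub I2).congr_fun hh hU.measurableSet)
    intro x hx
    obtain ⟨-, -, b3, b4, -⟩ := hC x hx
    rw [rad_fderiv_self _ _ _ (hne x hx)]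
    have hs1 := (hs x hx).1
    have hp1 := hp x hx e
    have t1 := mul_le_mul (B4 x hx) b4 (abs_nonneg _) (mul_nonneg (mul_nonneg k4 hs1.le) hp1.le)
    have t2 := mul_le_mul b3 (B5 x hx) (abs_nonneg _) hC0
    rw [← abs_mul] at t1 t2
    refine (abs_sub _ _).trans ((add_le_add t1 t2).trans ?_)
    have e1 : K4 * (1 - ‖x‖ ^ 2) * ‖x‖ ^ e * C + C * (K5 * (1 - ‖x‖ ^ 2) * ‖x‖ ^ e) =
      ((1 - ‖x‖ ^ 2) * (K4 * C + C * K5)) * ‖x‖ ^ e := by ring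
    have e2 : (1 - ‖x‖ ^ 2) * ‖x‖ ^ 2 * ((K4 * C + C * K5) * ‖x‖ ^ (e - 2 - 2)) =
      ((1 - ‖x‖ ^ 2) * (K4 * C + C * K5)) * ‖x‖ ^ (e - 2) := by rw [← hr2 x hx]; ring
    rw [e1, e2]
    exact mul_le_mul_of_nonneg_left (hm2 x hx)
      (mul_nonneg hs1.le (add_nonneg (mul_nonneg k4 hC0) (mul_nonneg hC0 k5)))
  have G : ∫ x in pball N, (rad a e n x * biharm u x - u x * rad a2 (e - 2 - 2) n x) = 0 := by
    rw [integral_sub I1 I2] at G1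
    rw [integral_sub I3 I2] at G2
    rw [integral_sub I3 I1]; linarith
  by_contra hcon
  rw [not_le] at hcon
  -- radial comparison
  obtain ⟨J1, j1⟩ := rad_integral hN q (e - 2 - 2) n hκ
  obtain ⟨J2, j2⟩ := rad_integral hN c (e - 2 - 2 + 4 / 3) n2 (by linarith)
  have hlow : ∫ x in pball N, lam * (3 * rad c (e - 2 - 2 + 4 / 3) n2 x - 2 * rad q (e - 2 - 2) n x) ≤ 0 := by
    rw [← G]
    refine setIntegral_mono_on (((J2.const_mul 3).sub (J1.const_mul 2)).const_mul lam) (I3.sub I1)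
      hU.measurableSet fun x hx => ?_
    obtain ⟨h0, h1⟩ := pball_mem.1 hx
    have hu0 := h.pos x hx.1
    have hu1 := h.lt_one x hx.1
    rw [h.eqn x hx.1, rad_eq _ _ _ h0, rad_eq _ _ _ h0, rad_eq _ _ _ h0, rad_eq _ _ _ h0,
      ← hc _ h0 h1]
    have hPx := hP _ h0 h1
    have hLx := hL _ h0 h1
    have hQx := hQ _ h0 h1
    have hτx := hτ _ h0 h1
    change ∑ k ∈ Finset.range n, a2 k * ‖x‖ ^ k ≤ _ at hLx
    set P := ∑ k ∈ Finset.range n, a k * ‖x‖ ^ k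
    set Q := ∑ k ∈ Finset.range n, q k * ‖x‖ ^ k
    set L2 := ∑ k ∈ Finset.range n, a2 k * ‖x‖ ^ k
    have hz := hp x hx (e - 2 - 2)
    set z := ‖x‖ ^ (e - 2 - 2) with hzd
    have hρ := hp x hx (4 / 3)
    have e1 : ‖x‖ ^ (e - 2 - 2 + 4 / 3) = z * ‖x‖ ^ (4 / 3 : ℝ) := Real.rpow_add h0 _ _
    have e2 : ‖x‖ ^ e = z * (‖x‖ ^ (4 / 3 : ℝ)) ^ 3 := by
      rw [hzd, ← Real.rpow_natCast (‖x‖ ^ (4 / 3 : ℝ)), ← Real.rpow_mul h0.le, ← Real.rpow_add h0]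
      congr 1; push_cast; ring
    rw [e1, e2]
    set ρ := ‖x‖ ^ (4 / 3 : ℝ)
    set y := 1 - u x with hy
    have hy0 : 0 < y := by rw [hy]; linarith
    have hux : u x = 1 - y := by rw [hy]; ring
    -- tangent inequality
    have key : (3 * (ρ * τ ‖x‖) - 2 * y) * y ^ 2 ≤ (ρ * τ ‖x‖) ^ 3 := by
      have ht : 0 ≤ ρ * τ ‖x‖ := mul_nonneg hρ.le hτx
      nlinarith [mul_nonneg (sq_nonneg (ρ * τ ‖x‖ - y)) (show 0 ≤ ρ * τ ‖x‖ + 2 * y by linarith)]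
    have key2 : 3 * (ρ * τ ‖x‖) - 2 * y ≤ (ρ * τ ‖x‖) ^ 3 / y ^ 2 := by
      rw [le_div_iff₀ (by positivity)]; exact key
    have s1 : z * Q * (3 * (ρ * τ ‖x‖) - 2 * y) ≤ z * Q * ((ρ * τ ‖x‖) ^ 3 / y ^ 2) :=
      mul_le_mul_of_nonneg_left key2 (mul_nonneg hz.le hQx)
    have s2 : z * ρ ^ 3 * (τ ‖x‖ ^ 3 * Q) * (lam / y ^ 2) ≤ z * ρ ^ 3 * P * (lam / y ^ 2) := by
      gcongr
    have s3 : lam * (z * Q * ((ρ * τ ‖x‖) ^ 3 / y ^ 2)) = z * ρ ^ 3 * (τ ‖x‖ ^ 3 * Q) * (lam / y ^ 2) := by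
      ring
    have s4 := mul_le_mul_of_nonneg_left s1 hlam.le
    have s5 : u x * (z * L2) ≤ u x * (z * (2 * L * Q)) := by gcongr
    have s6 : 0 ≤ 2 * (lam - L) * (u x * z * Q) :=
      mul_nonneg (by linarith) (mul_nonneg (mul_nonneg hu0.le hz.le) hQx)
    rw [s3] at s4
    rw [hux] at s5 s6 ⊢
    linarith [s2, s4, s5, s6]
  rw [integral_const_mul, integral_sub (J2.const_mul 3) (J1.const_mul 2), integral_const_mul,
    integral_const_mul, j1, j2] at hlow
  have f1 : e - 2 - 2 + 4 / 3 + (N:ℝ) = 2 := by rw [he]; ring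
  have f2 : e - 2 - 2 + (N:ℝ) = 2 / 3 := by rw [he]; ring
  rw [f1, f2] at hlow
  have := mul_pos hlam (mul_pos (surf_pos hN) hobj)
  linarith

end

noncomputable section

/-- Homogeneous Bernstein-type form. -/
def bern : List ℝ → ℝ → ℝ → ℝ
  | [], _, _ => 0
  | c :: l, r, s => c * s ^ l.length + r * bern l r s

lemma bern_nonneg (l : List ℝ) (hl : ∀ c ∈ l, 0 ≤ c) {r s : ℝ} (hr : 0 ≤ r) (hs : 0 ≤ s) :
    0 ≤ bern l r s := by
  induction l with
  | nil => simp [bern]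
  | cons c l ih =>
    have h1 := hl c (by simp)
    have h2 := ih fun d hd => hl d (by simp [hd])
    rw [bern]; positivity

lemma bound10 {lam : ℝ} (hlam : 0 < lam) {u : EuclideanSpace ℝ (Fin 10) → ℝ}
    (h : IsClassicalSolution 10 lam u) : lam ≤ 450 := by
  refine certificate (N := 10) (by norm_num) 13 15
    (fun k => ([88, 1354, -137, 4620, 20385, -108252, 213444, -320772, 377340, -310410, 169776, -55962, 8526] : List ℝ).getD k 0)
    (fun k => ([8, 254, -82, 1410, 1830, -564, -18942, 24096, 59835, -232440, 316081, -206462, 54976] : List ℝ).getD k 0)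
    (fun k => ([384/25, 2416/5, -7568/25, 13283/5, 68879/25, -66087/25, -183741/5, 1427154/25, 542937/5,
      -12223722/25, 35715231/50, -2425426/5, 5053093/50, 47669, -522272/25] : List ℝ).getD k 0)
    (fun r => (48/25) + (-14/25) * r + (-19/50) * r ^ 2) 450 (14 / 3 - (10 : ℕ)) rfl
    ?_ ?_ ?_ ?_ ?_ ?_ ?_ ?_ hlam h
  · intro r h0 h1
    have hb := bern_nonneg [8, 350, 3240, 16320, 56700, 145152, 254310, 281760, 252765, 104030, 35565]
      (by norm_num) h0.le (sub_nonneg.2 h1.le)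
    have hb2 := mul_nonneg (sq_nonneg (1 - r)) hb
    refine hb2.trans_eq ?_
    simp [Finset.sum_range_succ, bern]
    ring
  · intro r h0 h1
    have hb := bern_nonneg [48/25, 82/25, 49/50]
      (by norm_num) h0.le (sub_nonneg.2 h1.le)
    refine hb.trans_eq ?_
    simp [bern]
    ring
  · intro r h0 h1
    have hb := bern_nonneg [490264/15625, 4625834/15625, 15698041/15625, 15085324/15625, 110484971/15625, 1131777832/15625,
      3842993004/15625, 22489118529/62500, 3689253324/15625, 9595125107/31250, 1195423123/1250,
      84540449293/62500, 49132443157/62500, 3277338119/31250, 5500955739/125000,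
      9196985781/62500, 1804707051/25000, 2767344/3125, 3731769/25000, 47782781/12500,
      24337663/25000]
      (by norm_num) h0.le (sub_nonneg.2 h1.le)
    have hb2 := mul_nonneg (sq_nonneg (1 - r)) hb
    refine sub_nonneg.1 (hb2.trans_eq ?_)
    simp [Finset.sum_range_succ, bern]
    ring
  · intro r h0 h1
    have hb := bern_nonneg [87584/81, 624730/27, 190690, 9061750/9, 106689070/27, 327350540/27, 807192140/27, 181029640/3,
      906793780/9, 11347618930/81, 4397127118/27, 4255796980/27, 3368220800/27, 2115702920/27,
      1022166280/27, 41540032/3, 105870620/27, 24389020/27, 12870440/81, 405490/27, 698/3]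
      (by norm_num) h0.le (sub_nonneg.2 h1.le)
    refine sub_nonneg.1 (hb.trans_eq ?_)
    simp [Finset.sum_range_succ, bern]
    ring
  · simp [Finset.sum_range_succ]
    norm_num
  · simp [Finset.sum_range_succ]
    norm_num
  · intro r h0 h1
    simp [Finset.sum_range_succ]
    ring
  · simp [Finset.sum_range_succ]
    norm_num

lemma bound11 {lam : ℝ} (hlam : 0 < lam) {u : EuclideanSpace ℝ (Fin 11) → ℝ}
    (h : IsClassicalSolution 11 lam u) : lam ≤ 560 := by
  refine certificate (N := 11) (by norm_num) 13 15
    (fun k => ([57, 336, 417, -3270, 20460, -62520, 130620, -215040, 254625, -206210, 111415, -36380, 5490] : List ℝ).getD k 0)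
    (fun k => ([6, 68, 161, -1270, 6375, -11976, 6552, 11424, -9375, -40670, 85317, -65724, 19112] : List ℝ).getD k 0)
    (fun k => ([288/25, 3183/25, 6753/25, -127559/50, 643231/50, -1297691/50, 831219/50, 573672/25, -666468/25,
      -3868251/50, 9466647/50, -7840333/50, 1988277/50, 366366/25, -181564/25] : List ℝ).getD k 0)
    (fun r => (48/25) + (-27/50) * r + (-19/50) * r ^ 2) 560 (14 / 3 - (11 : ℕ)) rfl
    ?_ ?_ ?_ ?_ ?_ ?_ ?_ ?_ hlam h
  · intro r h0 h1
    have hb := bern_nonneg [6, 140, 1305, 5400, 16380, 39816, 65310, 72960, 72315, 30130, 12242]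
      (by norm_num) h0.le (sub_nonneg.2 h1.le)
    have hb2 := mul_nonneg (sq_nonneg (1 - r)) hb
    refine hb2.trans_eq ?_
    simp [Finset.sum_range_succ, bern]
    ring
  · intro r h0 h1
    have hb := bern_nonneg [48/25, 33/10, 1]
      (by norm_num) h0.le (sub_nonneg.2 h1.le)
    refine hb.trans_eq ?_
    simp [bern]
    ring
  · intro r h0 h1
    have hb := bern_nonneg [227073/15625, 3285222/15625, 11827848/15625, 12831153/62500, 22075848/15625, 4292664999/125000,
      7792138803/62500, 5832035561/31250, 2246017807/15625, 26262234029/125000,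
      33363603579/62500, 87352824637/125000, 6337722351/15625, 4603327491/62500,
      1025552457/31250, 1759996577/25000, 41759601/1250, 385967/500, 7137/50, 8581/5, 440]
      (by norm_num) h0.le (sub_nonneg.2 h1.le)
    have hb2 := mul_nonneg (sq_nonneg (1 - r)) hb
    refine sub_nonneg.1 (hb2.trans_eq ?_)
    simp [Finset.sum_range_succ, bern]
    ring
  · intro r h0 h1
    have hb := bern_nonneg [37040/27, 209600/9, 659216/3, 35701792/27, 148044832/27, 455378624/27, 1103372320/27,
      2174478592/27, 3488162336/27, 13471434848/81, 4615510912/27, 1293734560/9, 945111824/9,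
      1896294016/27, 1123772576/27, 176183104/9, 174769360/27, 35990624/27, 11968016/81,
      246592/27, 2576/3]
      (by norm_num) h0.le (sub_nonneg.2 h1.le)
    refine sub_nonneg.1 (hb.trans_eq ?_)
    simp [Finset.sum_range_succ, bern]
    ring
  · simp [Finset.sum_range_succ]
    norm_num
  · simp [Finset.sum_range_succ]
    norm_num
  · intro r h0 h1
    simp [Finset.sum_range_succ]
    ring
  · simp [Finset.sum_range_succ]
    norm_num

lemma bound12 {lam : ℝ} (hlam : 0 < lam) {u : EuclideanSpace ℝ (Fin 12) → ℝ}
    (h : IsClassicalSolution 12 lam u) : lam ≤ 680 := by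
  refine certificate (N := 12) (by norm_num) 13 15
    (fun k => ([21, 108, 81, -930, 5910, -20100, 49770, -90360, 112365, -96170, 55565, -19360, 3100] : List ℝ).getD k 0)
    (fun k => ([2, 26, 32, -390, 2250, -5616, 6972, 144, -10980, 7490, 8168, -13246, 5148] : List ℝ).getD k 0)
    (fun k => ([19/5, 1209/25, 1163/25, -19188/25, 111641/25, -58461/5, 382803/25, -30444/25, -589656/25,
      497147/25, 78984/5, -806524/25, 339132/25, 58913/25, -48906/25] : List ℝ).getD k 0)
    (fun r => (19/10) + (-13/25) * r + (-19/50) * r ^ 2) 680 (14 / 3 - (12 : ℕ)) rfl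
    ?_ ?_ ?_ ?_ ?_ ?_ ?_ ?_ hlam h
  · intro r h0 h1
    have hb := bern_nonneg [2, 50, 450, 1800, 5460, 12348, 18480, 22560, 22410, 9700, 4804]
      (by norm_num) h0.le (sub_nonneg.2 h1.le)
    have hb2 := mul_nonneg (sq_nonneg (1 - r)) hb
    refine hb2.trans_eq ?_
    simp [Finset.sum_range_succ, bern]
    ring
  · intro r h0 h1
    have hb := bern_nonneg [19/10, 82/25, 1]
      (by norm_num) h0.le (sub_nonneg.2 h1.le)
    refine hb.trans_eq ?_
    simp [bern]
    ring
  · intro r h0 h1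
    have hb := bern_nonneg [3641/500, 252833/2500, 5684213/12500, 16546454/15625, 204195739/62500, 788313071/62500,
      1815530039/62500, 1374245873/31250, 5601800729/62500, 3433272889/15625, 10664026857/31250,
      4334730314/15625, 6541472809/62500, 1681793311/31250, 1603725607/15625, 1414731943/15625,
      459547532/15625, 5562328/15625, 31062/625, 26566/25, 262]
      (by norm_num) h0.le (sub_nonneg.2 h1.le)
    have hb2 := mul_nonneg (sq_nonneg (1 - r)) hb
    refine sub_nonneg.1 (hb2.trans_eq ?_)
    simp [Finset.sum_range_succ, bern]
    ring
  · intro r h0 h1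
    have hb := bern_nonneg [4448/27, 103180/27, 1225892/27, 9490786/27, 5175194/3, 5778452, 391880900/27, 264672692/9,
      445345676/9, 5525280254/81, 6050859962/81, 5132091070/81, 3344975618/81, 1717670224/81,
      750633344/81, 306601384/81, 115642760/81, 35709466/81, 8007598/81, 368576/27, 2020/3]
      (by norm_num) h0.le (sub_nonneg.2 h1.le)
    refine sub_nonneg.1 (hb.trans_eq ?_)
    simp [Finset.sum_range_succ, bern]
    ring
  · simp [Finset.sum_range_succ]
    norm_num
  · simp [Finset.sum_range_succ]
    norm_num
  · intro r h0 h1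
    simp [Finset.sum_range_succ]
    ring
  · simp [Finset.sum_range_succ]
    norm_num

lemma bound13 {lam : ℝ} (hlam : 0 < lam) {u : EuclideanSpace ℝ (Fin 13) → ℝ}
    (h : IsClassicalSolution 13 lam u) : lam ≤ 802 := by
  refine certificate (N := 13) (by norm_num) 13 15
    (fun k => ([71, 418, -779, 2180, -480, -13800, 59850, -136980, 196785, -196810, 131650, -51050, 8945] : List ℝ).getD k 0)
    (fun k => ([8, 104, -277, 930, 825, -15996, 73542, -202416, 382215, -502100, 436241, -225682, 52606] : List ℝ).getD k 0)
    (fun k => ([76/5, 968/5, -1163/2, 18639/10, 12133/10, -311769/10, 736989/5, -414963, 7979997/10,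
      -10641311/10, 9270219/10, -4460763/10, 38296, 319849/5, -105212/5] : List ℝ).getD k 0)
    (fun r => (19/10) + (-1/2) * r + (-2/5) * r ^ 2) 802 (14 / 3 - (13 : ℕ)) rfl
    ?_ ?_ ?_ ?_ ?_ ?_ ?_ ?_ hlam h
  · intro r h0 h1
    have hb := bern_nonneg [8, 200, 1395, 5640, 17850, 31500, 60060, 50880, 68445, 23580, 16648]
      (by norm_num) h0.le (sub_nonneg.2 h1.le)
    have hb2 := mul_nonneg (sq_nonneg (1 - r)) hb
    refine hb2.trans_eq ?_
    simp [Finset.sum_range_succ, bern]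
    ring
  · intro r h0 h1
    have hb := bern_nonneg [19/10, 33/10, 1]
      (by norm_num) h0.le (sub_nonneg.2 h1.le)
    refine hb.trans_eq ?_
    simp [bern]
    ring
  · intro r h0 h1
    have hb := bern_nonneg [2016/125, 514/5, 140591/1000, 647203/1000, 2195267/1000, 2196241/1000, 5351497/1000,
      22345559/1000, 6868159/100, 5408503/25, 434331223/1000, 84767559/200, 161112861/1000,
      102640163/1000, 286333217/1000, 287340051/1000, 50794321/500, 326681/250, 5386/25,
      21514/5, 1093]
      (by norm_num) h0.le (sub_nonneg.2 h1.le)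
    have hb2 := mul_nonneg (sq_nonneg (1 - r)) hb
    refine sub_nonneg.1 (hb2.trans_eq ?_)
    simp [Finset.sum_range_succ, bern]
    ring
  · intro r h0 h1
    have hb := bern_nonneg [158992/81, 2530096/81, 23317196/81, 145646992/81, 730198760/81, 2345444752/81, 5227350056/81,
      9998826976/81, 16885755332/81, 21612992800/81, 20367026012/81, 18171565936/81,
      18338089736/81, 14959528912/81, 7275980240/81, 1992887872/81, 602328356/81, 244810576/81,
      18581152/81, 763040/27, 286600/3]
      (by norm_num) h0.le (sub_nonneg.2 h1.le)
    refine sub_nonneg.1 (hb.trans_eq ?_)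
    simp [Finset.sum_range_succ, bern]
    ring
  · simp [Finset.sum_range_succ]
    norm_num
  · simp [Finset.sum_range_succ]
    norm_num
  · intro r h0 h1
    simp [Finset.sum_range_succ]
    ring
  · simp [Finset.sum_range_succ]
    norm_num

lemma bound14 {lam : ℝ} (hlam : 0 < lam) {u : EuclideanSpace ℝ (Fin 14) → ℝ}
    (h : IsClassicalSolution 14 lam u) : lam ≤ 940 := by
  refine certificate (N := 14) (by norm_num) 13 15
    (fun k => ([226, 1358, -2089, 1960, 24975, -140544, 435498, -887364, 1253070, -1242470, 805125, -301680,
      51935] : List ℝ).getD k 0)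
    (fun k => ([24, 372, -906, 1080, 19740, -136860, 522060, -1330020, 2384235, -2981740, 2474122, -1227164,
      275057] : List ℝ).getD k 0)
    (fun k => ([1128/25, 17196/25, -47286/25, 57912/25, 184776/5, -267204, 5196348/5, -13481412/5, 24559737/5,
      -6218096, 128222264/25, -57548772/25, 2912427/25, 8970956/25, -550114/5] : List ℝ).getD k 0)
    (fun r => (47/25) + (-12/25) * r + (-2/5) * r ^ 2) 940 (14 / 3 - (14 : ℕ)) rfl
    ?_ ?_ ?_ ?_ ?_ ?_ ?_ ?_ hlam h
  · intro r h0 h1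
    have hb := bern_nonneg [24, 660, 4770, 17760, 61950, 92988, 211260, 132360, 237195, 60200, 63826]
      (by norm_num) h0.le (sub_nonneg.2 h1.le)
    have hb2 := mul_nonneg (sq_nonneg (1 - r)) hb
    refine hb2.trans_eq ?_
    simp [Finset.sum_range_succ, bern]
    ring
  · intro r h0 h1
    have hb := bern_nonneg [47/25, 82/25, 1]
      (by norm_num) h0.le (sub_nonneg.2 h1.le)
    refine hb.trans_eq ?_
    simp [bern]
    ring
  · intro r h0 h1
    have hb := bern_nonneg [1039498/15625, 7374126/15625, 6841733/15625, 2074848/625, 52422387/3125, 545816004/15625,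
      1388846118/15625, 2825584944/15625, 464900181/3125, 625075108/3125, 11141600308/15625,
      13532465336/15625, 2479006773/15625, 301492284/3125, 3096146934/3125, 17811715232/15625,
      6570728769/15625, 20901982/15625, 133803/625, 497704/25, 5176]
      (by norm_num) h0.le (sub_nonneg.2 h1.le)
    have hb2 := mul_nonneg (sq_nonneg (1 - r)) hb
    refine sub_nonneg.1 (hb2.trans_eq ?_)
    simp [Finset.sum_range_succ, bern]
    ring
  · intro r h0 h1
    have hb := bern_nonneg [212288/81, 3009170/81, 22998118/81, 131771774/81, 1153229674/81, 3657225128/81, 5729590360/81,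
      11581949372/81, 29051995396/81, 40067520986/81, 9236475578/27, 8778591470/27,
      16967151410/27, 5912367860/9, 2546175580/9, 755683192/27, 217840840/27, 319092392/27,
      26818168/81, 1079036/27, 1899916/3]
      (by norm_num) h0.le (sub_nonneg.2 h1.le)
    refine sub_nonneg.1 (hb.trans_eq ?_)
    simp [Finset.sum_range_succ, bern]
    ring
  · simp [Finset.sum_range_succ]
    norm_num
  · simp [Finset.sum_range_succ]
    norm_num
  · intro r h0 h1
    simp [Finset.sum_range_succ]
    ring
  · simp [Finset.sum_range_succ]
    norm_num

lemma bound15 {lam : ℝ} (hlam : 0 < lam) {u : EuclideanSpace ℝ (Fin 15) → ℝ}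
    (h : IsClassicalSolution 15 lam u) : lam ≤ 1100 := by
  refine certificate (N := 15) (by norm_num) 13 15
    (fun k => ([78, 384, -867, 2790, -4905, 5040, 630, -9300, 17835, -24250, 16500, -6510, 2575] : List ℝ).getD k 0)
    (fun k => ([9, 112, -431, 1930, -2850, -13596, 112392, -401076, 880695, -1245890, 1108287, -567084, 127502] : List ℝ).getD k 0)
    (fun k => ([423/25, 5156/25, -21691/25, 94762/25, -6112, -624112/25, 5474076/25, -20063316/25, 45081657/25,
      -13022882/5, 58233219/25, -27493492/25, 1714732/25, 4140816/25, -255004/5] : List ℝ).getD k 0)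
    (fun r => (47/25) + (-12/25) * r + (-2/5) * r ^ 2) 1100 (14 / 3 - (15 : ℕ)) rfl
    ?_ ?_ ?_ ?_ ?_ ?_ ?_ ?_ hlam h
  · intro r h0 h1
    have hb := bern_nonneg [9, 220, 1395, 5760, 18060, 25452, 69090, 21600, 79920, 9370, 21430]
      (by norm_num) h0.le (sub_nonneg.2 h1.le)
    have hb2 := mul_nonneg (sq_nonneg (1 - r)) hb
    refine hb2.trans_eq ?_
    simp [Finset.sum_range_succ, bern]
    ring
  · intro r h0 h1
    have hb := bern_nonneg [47/25, 82/25, 1]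
      (by norm_num) h0.le (sub_nonneg.2 h1.le)
    refine hb.trans_eq ?_
    simp [bern]
    ring
  · intro r h0 h1
    have hb := bern_nonneg [284343/15625, 1343086/15625, 3042793/15625, 6099144/3125, 11372736/3125, 92256792/15625,
      862424724/15625, 2118173512/15625, 12103604/125, 611542032/3125, 14041434249/15625,
      23004718098/15625, 14436626109/15625, 310536264/3125, 134731314/3125, 689570756/3125,
      362329327/3125, 2289002/3125, 10208/125, 36594/5, 1973]
      (by norm_num) h0.le (sub_nonneg.2 h1.le)
    have hb2 := mul_nonneg (sq_nonneg (1 - r)) hb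
    refine sub_nonneg.1 (hb2.trans_eq ?_)
    simp [Finset.sum_range_succ, bern]
    ring
  · intro r h0 h1
    have hb := bern_nonneg [57448/27, 366560/9, 1051400/3, 18428560/9, 12129560, 344029664/9, 676591280/9, 4065844000/27,
      8181673400/27, 34109151040/81, 32255318744/81, 30249161920/81, 30916314200/81,
      20432834080/81, 5733696800/81, 2058125536/81, 3219069440/81, 1532140000/81, 11848640/27,
      461680/9, 533104]
      (by norm_num) h0.le (sub_nonneg.2 h1.le)
    refine sub_nonneg.1 (hb.trans_eq ?_)
    simp [Finset.sum_range_succ, bern]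
    ring
  · simp [Finset.sum_range_succ]
    norm_num
  · simp [Finset.sum_range_succ]
    norm_num
  · intro r h0 h1
    simp [Finset.sum_range_succ]
    ring
  · simp [Finset.sum_range_succ]
    norm_num

lemma bound16 {lam : ℝ} (hlam : 0 < lam) {u : EuclideanSpace ℝ (Fin 16) → ℝ}
    (h : IsClassicalSolution 16 lam u) : lam ≤ 1260 := by
  refine certificate (N := 16) (by norm_num) 13 15
    (fun k => ([265, 1590, -5505, 22580, -64050, 138612, -224364, 271332, -226350, 107410, -9324, -35382,
      23186] : List ℝ).getD k 0)
    (fun k => ([29, 492, -2871, 15910, -47160, 42336, 286188, -1458744, 3529560, -5168100, 4656844, -2390348,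
      535864] : List ℝ).getD k 0)
    (fun k => ([1363/25, 45581/50, -28177/5, 1551733/50, -94831, 2373032/25, 13435572/25, -14455098/5,
      179802996/25, -10756128, 243009218/25, -114219062/25, 1221234/5, 17741044/25, -1071728/5] : List ℝ).getD k 0)
    (fun r => (47/25) + (-23/50) * r + (-2/5) * r ^ 2) 1260 (14 / 3 - (16 : ℕ)) rfl
    ?_ ?_ ?_ ?_ ?_ ?_ ?_ ?_ hlam h
  · intro r h0 h1
    have hb := bern_nonneg [29, 840, 4455, 20640, 62370, 78624, 249690, 37920, 287685, 6740, 76399]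
      (by norm_num) h0.le (sub_nonneg.2 h1.le)
    have hb2 := mul_nonneg (sq_nonneg (1 - r)) hb
    refine hb2.trans_eq ?_
    simp [Finset.sum_range_succ, bern]
    ring
  · intro r h0 h1
    have hb := bern_nonneg [47/25, 33/10, 51/50]
      (by norm_num) h0.le (sub_nonneg.2 h1.le)
    refine hb.trans_eq ?_
    simp [bern]
    ring
  · intro r h0 h1
    have hb := bern_nonneg [1129758/15625, 1655229/31250, 29370561/62500, 1740826663/125000, 4253629039/125000,
      546687393/15625, 3073088904/15625, 15336263541/31250, 6682533399/31250, 8319321697/31250,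
      8716744749/3125, 322813896721/62500, 200578145627/62500, 1190667417/15625,
      466601896/15625, 27784983939/31250, 15226895979/31250, 8478879/15625, 5234699/62500,
      4151236759/125000, 1142221251/125000]
      (by norm_num) h0.le (sub_nonneg.2 h1.le)
    have hb2 := mul_nonneg (sq_nonneg (1 - r)) hb
    refine sub_nonneg.1 (hb2.trans_eq ?_)
    simp [Finset.sum_range_succ, bern]
    ring
  · intro r h0 h1
    have hb := bern_nonneg [153080/81, 3183490/81, 32337710/81, 187355890/81, 2001554510/81, 5864098180/81, 6792066140/81,
      14423433712/81, 45514787816/81, 62419850566/81, 35798856242/81, 32785842820/81,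
      66039163400/81, 51992528800/81, 7649954240/81, 3013810120/81, 13416775040/81,
      6803817028/81, 15105148/27, 547346/9, 2566458]
      (by norm_num) h0.le (sub_nonneg.2 h1.le)
    refine sub_nonneg.1 (hb.trans_eq ?_)
    simp [Finset.sum_range_succ, bern]
    ring
  · simp [Finset.sum_range_succ]
    norm_num
  · simp [Finset.sum_range_succ]
    norm_num
  · intro r h0 h1
    simp [Finset.sum_range_succ]
    ring
  · simp [Finset.sum_range_succ]
    norm_num

end

/-- for 10 ≤ N ≤ 16, the pull-in voltage satisfies λ* ≤ λ'_N. -/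
theorem pullIn_le_of_dim_10_to_16 (N : ℕ) (hN₁ : 10 ≤ N) (hN₂ : N ≤ 16) :
    ∀ lam ∈ solSet N, lam ≤ lamPrime N := by
  intro lam hlam
  obtain ⟨h0, u, hu⟩ := hlam
  interval_cases N
  · exact bound10 h0 hu
  · exact bound11 h0 hu
  · exact bound12 h0 hu
  · exact bound13 h0 hu
  · exact bound14 h0 hu
  · exact bound15 h0 hu
  · exact bound16 h0 hu
end

section
/- Let N = 9. Then the pull-in voltage of (P)_λ on the unit ball satisfies λ* ≤ 366. -/
open MeasureTheory Metric Set Filter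

/-- Laurent polynomials as lists of (exponent, coefficient). -/
noncomputable def lev : List (ℤ × ℝ) → ℝ → ℝ
  | [], _ => 0
  | p :: L, z => p.2 * z ^ p.1 + lev L z

noncomputable def lder : List (ℤ × ℝ) → List (ℤ × ℝ)
  | [] => []
  | p :: L => (p.1 - 1, p.2 * p.1) :: lder L

lemma lev_hasDerivAt (L : List (ℤ × ℝ)) (z : ℝ) (hz : z ≠ 0) :
    HasDerivAt (lev L) (lev (lder L) z) z := by
  induction L with
  | nil => simpa [lev, lder] using hasDerivAt_const z (0 : ℝ)
  | cons p L ih =>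
    have h := ((hasDerivAt_zpow p.1 z (Or.inl hz)).const_mul p.2).add ih
    have e : lev (lder (p :: L)) z = p.2 * (p.1 * z ^ (p.1 - 1)) + lev (lder L) z := by
      simp [lev, lder]; ring
    rw [e]
    exact h

lemma lev_contDiffOn (L : List (ℤ × ℝ)) : ContDiffOn ℝ 1 (lev L) (Ioi 0) := by
  induction L with
  | nil => exact contDiffOn_const
  | cons p L ih =>
    have h : ContDiffOn ℝ 1 (fun z : ℝ => p.2 * z ^ p.1 + lev L z) (Ioi 0) := by
      refine ContDiffOn.add (contDiffOn_const.mul ?_) ih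
      rw [contDiffOn_one_iff_derivWithin (uniqueDiffOn_Ioi 0)]
      have hd : ∀ x ∈ Ioi (0 : ℝ), HasDerivAt (fun z : ℝ => z ^ p.1) (p.1 * x ^ (p.1 - 1)) x :=
        fun x hx => hasDerivAt_zpow p.1 x (Or.inl (ne_of_gt hx))
      refine ⟨fun x hx => (hd x hx).differentiableAt.differentiableWithinAt, ?_⟩
      have : ContinuousOn (fun x : ℝ => (p.1 : ℝ) * x ^ (p.1 - 1)) (Ioi 0) := by
        refine continuousOn_const.mul ?_
        intro x hx
        exact (continuousAt_zpow₀ x _ (Or.inl (ne_of_gt hx))).continuousWithinAt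
      refine this.congr fun x hx => ?_
      exact (hd x hx).hasDerivWithinAt.derivWithin (uniqueDiffOn_Ioi 0 x hx)
    exact h

noncomputable def Lf : List (ℤ × ℝ) := [(-3, 1), (0, -4/125), (1, 3/625)]
noncomputable def Lk : List (ℤ × ℝ) := [(-5, -192), (-4, -24), (0, 216/625)]
noncomputable def Lg : List (ℤ × ℝ) :=
  [(-5, -4574296/78125),
   (-4, 26543317/312500),
   (-3, -76705031/937500),
   (-2, 24554098351/250000000),
   (-1, -677458214263/2500000000),
   (0, 3254535808403211984639378939815771231136319/4424128458750000000000000000000000000000),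
   (1, -1689207213409506484705412952135072990277051/1305732357617187500000000000000000000000),
   (2, 717112173994739581503025092245190687159199/474811766406250000000000000000000000000),
   (3, -271264521718555661956389074117513571625301/219143892187500000000000000000000000000),
   (4, 676443064510981500961888985294813479603/913099550781250000000000000000000000),
   (5, -178159145444024242579010286046612469937/537117382812500000000000000000000000),
   (6, 25452245986223896428206722060348177267/226154687500000000000000000000000000),
   (7, -6567204714863487747769319164954573637/226154687500000000000000000000000000),
   (8, 111432087735272167459911294653826011/19665625000000000000000000000000000),
   (9, -11651529884291023512548695351840807/14159250000000000000000000000000000),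
   (10, 84796676216474296234532666856647/983281250000000000000000000000000),
   (11, -18396595324405425680233000234407/2983750000000000000000000000000000),
   (12, 19433621161715428644911853829/72187500000000000000000000000000),
   (13, -47399077805026424473842169/8750000000000000000000000000000)]

noncomputable def sfun (z : ℝ) : ℝ := 166/25 / z + 2/5 * z - 229/100

lemma Lf_five : lev Lf 5 = 0 := by
  norm_num [lev, Lf]

lemma Lf'_five : lev (lder Lf) 5 = 0 := by
  norm_num [lev, lder, Lf]

lemma Lg_five : lev Lg 5 = 0 := by
  norm_num [lev, Lg]

lemma Lf_val (z : ℝ) (hz : 0 < z) :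
    lev Lf z = (z - 5) ^ 2 * (3 * z ^ 2 + 10 * z + 25) / (625 * z ^ 3) := by
  have hz0 : z ≠ 0 := hz.ne'
  have e3 : z ^ (-3 : ℤ) = 1 / z ^ 3 := by rw [zpow_neg]; norm_cast; simp
  simp only [lev, Lf, e3, zpow_zero, zpow_one]
  field_simp
  ring

lemma Lf_nonneg (z : ℝ) (hz : 0 < z) : 0 ≤ lev Lf z := by
  rw [Lf_val z hz]; positivity

lemma Lk_eq (z : ℝ) (hz : 0 < z) :
    lev Lk z = 72 * lev (lder Lf) z + 16 * (z - 1) * lev (lder (lder Lf)) z := by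
  have hz0 : z ≠ 0 := hz.ne'
  have e4 : z ^ (-4 : ℤ) = 1 / z ^ 4 := by rw [zpow_neg]; norm_cast; simp
  have e5 : z ^ (-5 : ℤ) = 1 / z ^ 5 := by rw [zpow_neg]; norm_cast; simp
  norm_num [lev, lder, Lf, Lk, e4, e5]
  field_simp
  ring

lemma sfun_nonneg (z : ℝ) (hz : 0 < z) : 0 ≤ sfun z := by
  have : sfun z = (166/25 + 2/5 * z ^ 2 - 229/100 * z) / z := by
    unfold sfun; field_simp
  rw [this]
  refine div_nonneg ?_ hz.le
  nlinarith [sq_nonneg (z - 229/80)]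

lemma psi_eq (z : ℝ) (hz : 0 < z) :
    72 * lev (lder Lk) z + 16 * (z - 1) * lev (lder (lder Lk)) z
      = (92160 - 15360 * z - 768 * z ^ 2) / z ^ 7 := by
  have hz0 : z ≠ 0 := hz.ne'
  have e5 : z ^ (-5 : ℤ) = 1 / z ^ 5 := by rw [zpow_neg]; norm_cast; simp
  have e6 : z ^ (-6 : ℤ) = 1 / z ^ 6 := by rw [zpow_neg]; norm_cast; simp
  have e7 : z ^ (-7 : ℤ) = 1 / z ^ 7 := by rw [zpow_neg]; norm_cast; simp
  norm_num [lev, lder, Lk, e5, e6, e7]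
  field_simp
  ring


lemma poly_nonneg (z : ℝ) (h1 : 1 ≤ z) (h5 : z ≤ 5) :
    0 ≤ (-92160) * z ^ 0 + (3588384672/15625) * z ^ 1 + (-3452367876/15625) * z ^ 2 + (3599838567/31250) * z ^ 3 + (-1323789682383/31250000) * z ^ 4 + (294201113697/19531250) * z ^ 5 + (-54249051798/9765625) * z ^ 6 + (67808753937/39062500) * z ^ 7 + (-61325072721/156250000) * z ^ 8 + (230691447/3906250) * z ^ 9 + (-2094252/390625) * z ^ 10 + (17568/78125) * z ^ 11 := by
  rcases le_total z 3 with h3 | h3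
  · rcases le_total z 2 with h | h
    · obtain ⟨t, ht⟩ : ∃ t, t = z - 1 := ⟨_, rfl⟩
      obtain ⟨w, hw⟩ : ∃ w, w = 2 - z := ⟨_, rfl⟩
      have ht0 : 0 ≤ t := by linarith
      have hw0 : 0 ≤ w := by linarith
      have e : (-92160) * z ^ 0 + (3588384672/15625) * z ^ 1 + (-3452367876/15625) * z ^ 2 + (3599838567/31250) * z ^ 3 + (-1323789682383/31250000) * z ^ 4 + (294201113697/19531250) * z ^ 5 + (-54249051798/9765625) * z ^ 6 + (67808753937/39062500) * z ^ 7 + (-61325072721/156250000) * z ^ 8 + (230691447/3906250) * z ^ 9 + (-2094252/390625) * z ^ 10 + (17568/78125) * z ^ 11 = (177486/625) * t ^ 0 * w ^ 11 + (288959907/15625) * t ^ 1 * w ^ 10 + (420146981199/3125000) * t ^ 2 * w ^ 9 + (35397345341007/78125000) * t ^ 3 * w ^ 8 + (140530409467947/156250000) * t ^ 4 * w ^ 7 + (180137924833617/156250000) * t ^ 5 * w ^ 6 + (154873976625099/156250000) * t ^ 6 * w ^ 5 + (18002733402753/31250000) * t ^ 7 * w ^ 4 + (4351854988431/19531250) *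 t ^ 8 * w ^ 3 + (1074561844383/19531250) * t ^ 9 * w ^ 2 + (77923397199/9765625) * t ^ 10 * w ^ 1 + (5336231073/9765625) * t ^ 11 * w ^ 0 := by
        subst ht hw; ring
      rw [e]; positivity
    · obtain ⟨t, ht⟩ : ∃ t, t = z - 2 := ⟨_, rfl⟩
      obtain ⟨w, hw⟩ : ∃ w, w = 3 - z := ⟨_, rfl⟩
      have ht0 : 0 ≤ t := by linarith
      have hw0 : 0 ≤ w := by linarith
      have e : (-92160) * z ^ 0 + (3588384672/15625) * z ^ 1 + (-3452367876/15625) * z ^ 2 + (3599838567/31250) * z ^ 3 + (-1323789682383/31250000) * z ^ 4 + (294201113697/19531250) * z ^ 5 + (-54249051798/9765625) * z ^ 6 + (67808753937/39062500) * z ^ 7 + (-61325072721/156250000) * z ^ 8 + (230691447/3906250) * z ^ 9 + (-2094252/390625) * z ^ 10 + (17568/78125) * z ^ 11 = (5336231073/9765625) * t ^ 0 * w ^ 11 + (39473686407/9765625) * t ^ 1 * w ^ 10 + (305567628543/19531250) * t ^ 2 * w ^ 9 + (1025485251543/19531250) * t ^ 3 * w ^ 8 + (24772893294213/156250000) * t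 ^ 4 * w ^ 7 + (11198275369983/31250000) * t ^ 5 * w ^ 6 + (86801867820657/156250000) * t ^ 6 * w ^ 5 + (90474235996131/156250000) * t ^ 7 * w ^ 4 + (31216338901503/78125000) * t ^ 8 * w ^ 3 + (13700607718191/78125000) * t ^ 9 * w ^ 2 + (433546604757/9765625) * t ^ 10 * w ^ 1 + (96481397277/19531250) * t ^ 11 * w ^ 0 := by
        subst ht hw; ring
      rw [e]; positivity
  · rcases le_total z 4 with h | h
    · obtain ⟨t, ht⟩ : ∃ t, t = z - 3 := ⟨_, rfl⟩
      obtain ⟨w, hw⟩ : ∃ w, w = 4 - z := ⟨_, rfl⟩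
      have ht0 : 0 ≤ t := by linarith
      have hw0 : 0 ≤ w := by linarith
      have e : (-92160) * z ^ 0 + (3588384672/15625) * z ^ 1 + (-3452367876/15625) * z ^ 2 + (3599838567/31250) * z ^ 3 + (-1323789682383/31250000) * z ^ 4 + (294201113697/19531250) * z ^ 5 + (-54249051798/9765625) * z ^ 6 + (67808753937/39062500) * z ^ 7 + (-61325072721/156250000) * z ^ 8 + (230691447/3906250) * z ^ 9 + (-2094252/390625) * z ^ 10 + (17568/78125) * z ^ 11 = (96481397277/19531250) * t ^ 0 * w ^ 11 + (125549753058/1953125) * t ^ 1 * w ^ 10 + (29236780560831/78125000) * t ^ 2 * w ^ 9 + (20101853359683/15625000) * t ^ 3 * w ^ 8 + (453424785900003/156250000) * t ^ 4 * w ^ 7 + (704576642446233/156250000) * t ^ 5 * w ^ 6 + (769393955999979/156250000) * t ^ 6 * w ^ 5 + (590048265906261/156250000) * t ^ 7 * w ^ 4 + (7777621548747/3906250) * t ^ 8 * w ^ 3 + (6702429377124/9765625) * t ^ 9 * w ^ 2 + (271359639672/1953125) * t ^ 10 * w ^ 1 + (121970639472/9765625) * t ^ 11 * w ^ 0 :=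 by
        subst ht hw; ring
      rw [e]; positivity
    · obtain ⟨t, ht⟩ : ∃ t, t = z - 4 := ⟨_, rfl⟩
      obtain ⟨w, hw⟩ : ∃ w, w = 5 - z := ⟨_, rfl⟩
      have ht0 : 0 ≤ t := by linarith
      have hw0 : 0 ≤ w := by linarith
      have e : (-92160) * z ^ 0 + (3588384672/15625) * z ^ 1 + (-3452367876/15625) * z ^ 2 + (3599838567/31250) * z ^ 3 + (-1323789682383/31250000) * z ^ 4 + (294201113697/19531250) * z ^ 5 + (-54249051798/9765625) * z ^ 6 + (67808753937/39062500) * z ^ 7 + (-61325072721/156250000) * z ^ 8 + (230691447/3906250) * z ^ 9 + (-2094252/390625) * z ^ 10 + (17568/78125) * z ^ 11 = (121970639472/9765625) * t ^ 0 * w ^ 11 + (1326555870024/9765625) * t ^ 1 * w ^ 10 + (6400006093764/9765625) * t ^ 2 * w ^ 9 + (35954486629209/19531250) * t ^ 3 * w ^ 8 + (518427055386837/156250000) * t ^ 4 * w ^ 7 + (622009690569531/156250000) * t ^ 5 * w ^ 6 + (497802482866809/156250000) * t ^ 6 * w ^ 5 + (51729946179327/31250000) * t ^ 7 * w ^ 4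 + (1656926641431/3125000) * t ^ 8 * w ^ 3 + (65229299091/625000) * t ^ 9 * w ^ 2 + (19200) * t ^ 10 * w ^ 1 + (3840) * t ^ 11 * w ^ 0 := by
        subst ht hw; ring
      rw [e]; positivity

lemma ineq_psi (z : ℝ) (h1 : 1 ≤ z) (h5 : z ≤ 5) :
    72 * lev (lder Lk) z + 16 * (z - 1) * lev (lder (lder Lk)) z
      ≤ 732 * lev Lf z * sfun z ^ 3 := by
  have hz : 0 < z := by linarith
  rw [psi_eq z hz, Lf_val z hz]
  have e : 732 * ((z - 5) ^ 2 * (3 * z ^ 2 + 10 * z + 25) / (625 * z ^ 3)) * sfun z ^ 3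
      - (92160 - 15360 * z - 768 * z ^ 2) / z ^ 7
      = ((-92160) * z ^ 0 + (3588384672/15625) * z ^ 1 + (-3452367876/15625) * z ^ 2 + (3599838567/31250) * z ^ 3 + (-1323789682383/31250000) * z ^ 4 + (294201113697/19531250) * z ^ 5 + (-54249051798/9765625) * z ^ 6 + (67808753937/39062500) * z ^ 7 + (-61325072721/156250000) * z ^ 8 + (230691447/3906250) * z ^ 9 + (-2094252/390625) * z ^ 10 + (17568/78125) * z ^ 11) / z ^ 7 := by
    unfold sfun; field_simp; ring
  have := div_nonneg (poly_nonneg z h1 h5) (pow_nonneg hz.le 7)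
  rw [← e] at this
  linarith

lemma ineq_g (z : ℝ) (h1 : 1 ≤ z) :
    1/20000 ≤ lev Lf z * (3 * sfun z ^ 2 - 2 * sfun z ^ 3)
      - (9 * lev Lg z + 2 * (z - 1) * lev (lder Lg) z) := by
  have hz : 0 < z := by linarith
  have hz0 : z ≠ 0 := hz.ne'
  have e1 : z ^ (-1 : ℤ) = 1 / z := by rw [zpow_neg]; norm_cast; simp
  have e2 : z ^ (-2 : ℤ) = 1 / z ^ 2 := by rw [zpow_neg]; norm_cast; simp
  have e3 : z ^ (-3 : ℤ) = 1 / z ^ 3 := by rw [zpow_neg]; norm_cast; simp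
  have e4 : z ^ (-4 : ℤ) = 1 / z ^ 4 := by rw [zpow_neg]; norm_cast; simp
  have e5 : z ^ (-5 : ℤ) = 1 / z ^ 5 := by rw [zpow_neg]; norm_cast; simp
  have e6 : z ^ (-6 : ℤ) = 1 / z ^ 6 := by rw [zpow_neg]; norm_cast; simp
  have e : lev Lf z * (3 * sfun z ^ 2 - 2 * sfun z ^ 3)
      - (9 * lev Lg z + 2 * (z - 1) * lev (lder Lg) z)
      = (4790238105409/2500000000) * ((1) * z ^ 0 + (-601109501/250000000) * z ^ 1 + (11997853453/5000000000) * z ^ 2 + (-403731037/312500000) * z ^ 3 + (507905921/1250000000) * z ^ 4 + (-149651483/2000000000) * z ^ 5 + (74865777/10000000000) * z ^ 6 + (-3145621/10000000000) * z ^ 7) ^ 2 / z + 2427980671179837831997794773975681621/41783435443750000000000000000000000000000 := by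
    rw [Lf_val z hz]
    norm_num [lev, lder, Lg, sfun, e1, e2, e3, e4, e5, e6, zpow_ofNat]
    field_simp
    ring
  rw [e]
  have : 0 ≤ (4790238105409/2500000000) * ((1) * z ^ 0 + (-601109501/250000000) * z ^ 1 + (11997853453/5000000000) * z ^ 2 + (-403731037/312500000) * z ^ 3 + (507905921/1250000000) * z ^ 4 + (-149651483/2000000000) * z ^ 5 + (74865777/10000000000) * z ^ 6 + (-3145621/10000000000) * z ^ 7) ^ 2 / z := by positivity
  linarith

abbrev E9 := EuclideanSpace ℝ (Fin 9)

lemma uniqK : UniqueDiffOn ℝ (closedBall (0 : E9) 1) := by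
  refine uniqueDiffOn_convex (convex_closedBall 0 1) ?_
  rw [interior_closedBall (0 : E9) one_ne_zero]
  exact ⟨0, by simp⟩

lemma theta_contDiff : ContDiff ℝ 1 Real.smoothTransition :=
  Real.smoothTransition.contDiff (n := 1)

lemma theta_deriv_large (t : ℝ) (ht : 1 < t) : deriv Real.smoothTransition t = 0 := by
  have : Real.smoothTransition =ᶠ[nhds t] fun _ => (1 : ℝ) := by
    filter_upwards [Ioi_mem_nhds ht] with s hs
    exact Real.smoothTransition.one_of_one_le (le_of_lt hs)
  rw [this.deriv_eq]; simp

lemma theta_deriv_small (t : ℝ) (ht : t < 0) : deriv Real.smoothTransition t = 0 := by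
  have : Real.smoothTransition =ᶠ[nhds t] fun _ => (0 : ℝ) := by
    filter_upwards [Iio_mem_nhds ht] with s hs
    exact Real.smoothTransition.zero_of_nonpos (le_of_lt hs)
  rw [this.deriv_eq]; simp

lemma theta_deriv_cont : Continuous (deriv Real.smoothTransition) :=
  theta_contDiff.continuous_deriv le_rfl

lemma theta_deriv_bound : ∃ M : ℝ, 0 ≤ M ∧ ∀ t, |deriv Real.smoothTransition t| ≤ M := by
  obtain ⟨M, hM⟩ := (isCompact_Icc (a := (0 : ℝ)) (b := 1)).exists_bound_of_continuousOn
    theta_deriv_cont.continuousOn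
  refine ⟨max M 0, le_max_right _ _, fun t => ?_⟩
  rcases lt_or_ge t 0 with h | h
  · rw [theta_deriv_small t h]; simp
  rcases lt_or_ge 1 t with h' | h'
  · rw [theta_deriv_large t h']; simp
  · exact (hM t ⟨h, h'⟩).trans (le_max_left _ _)

noncomputable def eta (n : ℕ) (x : E9) : ℝ := Real.smoothTransition (n * (1 - ‖x‖ ^ 2) - 1)

noncomputable def eta' (n : ℕ) (x : E9) : ℝ := deriv Real.smoothTransition (n * (1 - ‖x‖ ^ 2) - 1)

lemma eta_cont (n : ℕ) : Continuous (eta n) := by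
  have := Real.smoothTransition.continuous
  unfold eta; fun_prop

lemma eta'_cont (n : ℕ) : Continuous (eta' n) := by
  have := theta_deriv_cont
  unfold eta'; fun_prop

lemma normsq_deriv (x : E9) (i : Fin 9) :
    (2 • (innerSL ℝ x) : E9 →L[ℝ] ℝ) (EuclideanSpace.single i 1) = 2 * x i := by
  simp [EuclideanSpace.inner_single_right]

lemma eta_lineDeriv (n : ℕ) (x : E9) (i : Fin 9) :
    HasLineDerivAt ℝ (eta n) (eta' n x * (-(2 * n * x i))) x (EuclideanSpace.single i 1) := by
  have h1 : HasFDerivAt (fun x : E9 => ‖x‖ ^ 2) (2 • (innerSL ℝ x)) x :=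
    (hasStrictFDerivAt_norm_sq x).hasFDerivAt
  have h2 : HasDerivAt (fun r : ℝ => Real.smoothTransition (n * (1 - r) - 1))
      (eta' n x * (-n)) (‖x‖ ^ 2) := by
    have hd : HasDerivAt Real.smoothTransition (eta' n x) (n * (1 - ‖x‖ ^ 2) - 1) :=
      (theta_contDiff.differentiable one_ne_zero _).hasDerivAt
    have hl : HasDerivAt (fun r : ℝ => (n : ℝ) * (1 - r) - 1) (-n) (‖x‖ ^ 2) := by
      have := (((hasDerivAt_id (‖x‖ ^ 2)).const_sub 1).const_mul (n : ℝ)).sub_const 1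
      simpa using this
    exact HasDerivAt.comp (‖x‖ ^ 2) hd hl
  have h3 := (h2.comp_hasFDerivAt x h1).hasLineDerivAt (EuclideanSpace.single i 1)
  have e : ((eta' n x * (-n)) • (2 • (innerSL ℝ x) : E9 →L[ℝ] ℝ)) (EuclideanSpace.single i 1)
      = eta' n x * (-(2 * n * x i)) := by
    rw [smul_apply, normsq_deriv]; simp; ring
  rw [e] at h3
  exact h3

lemma mem_ball_of (n : ℕ) (x : E9) (h : 0 ≤ (n : ℝ) * (1 - ‖x‖ ^ 2) - 1) :
    x ∈ ball (0 : E9) 1 := by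
  rw [mem_ball_zero_iff]
  by_contra hc
  push Not at hc
  have : 1 - ‖x‖ ^ 2 ≤ 0 := by nlinarith
  have := mul_nonpos_of_nonneg_of_nonpos (Nat.cast_nonneg (α := ℝ) n) this
  linarith

lemma eta_tsupport (n : ℕ) : tsupport (eta n) ⊆ ball (0 : E9) 1 := by
  have hc : IsClosed {x : E9 | 0 ≤ (n : ℝ) * (1 - ‖x‖ ^ 2) - 1} :=
    isClosed_le continuous_const (by fun_prop)
  have : tsupport (eta n) ⊆ {x : E9 | 0 ≤ (n : ℝ) * (1 - ‖x‖ ^ 2) - 1} := by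
    refine closure_minimal (fun x hx => ?_) hc
    by_contra h
    simp only [mem_ofPred_eq, not_le] at h
    exact hx (Real.smoothTransition.zero_of_nonpos h.le)
  exact fun x hx => mem_ball_of n x (this hx)

lemma eta_zero (n : ℕ) (x : E9) (hx : x ∉ ball (0 : E9) 1) : eta n x = 0 := by
  by_contra h
  exact hx (eta_tsupport n (subset_closure h))

lemma eta'_zero (n : ℕ) (x : E9) (hx : x ∉ ball (0 : E9) 1) : eta' n x = 0 := by
  unfold eta'
  refine theta_deriv_small _ ?_
  by_contra h
  exact hx (mem_ball_of n x (not_lt.1 h))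

lemma integrable_of_ball (h : E9 → ℝ) (hc : ContinuousOn h (closedBall 0 1))
    (h0 : ∀ x, x ∉ ball (0 : E9) 1 → h x = 0) : Integrable h := by
  have h1 : IntegrableOn h (closedBall 0 1) := hc.integrableOn_compact (isCompact_closedBall _ _)
  refine (integrableOn_iff_integrable_of_support_subset ?_).1 h1
  intro x hx
  by_contra hn
  exact hx (h0 x fun hb => hn (ball_subset_closedBall hb))

noncomputable def dW (F : E9 → ℝ) (i : Fin 9) (x : E9) : ℝ :=
  fderivWithin ℝ F (closedBall 0 1) x (EuclideanSpace.single i 1)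

lemma dW_contDiffOn {n m : ℕ∞} {F : E9 → ℝ} (hF : ContDiffOn ℝ n F (closedBall 0 1))
    (hmn : m + 1 ≤ n) (i : Fin 9) : ContDiffOn ℝ m (dW F i) (closedBall 0 1) :=
  (hF.fderivWithin uniqK (by exact_mod_cast hmn)).clm_apply contDiffOn_const

lemma dW_continuousOn {F : E9 → ℝ} (hF : ContDiffOn ℝ 1 F (closedBall 0 1))
    (i : Fin 9) : ContinuousOn (dW F i) (closedBall 0 1) :=
  (hF.continuousOn_fderivWithin uniqK le_rfl).clm_apply continuousOn_const

lemma hasFDerivAt_of_ball {F : E9 → ℝ} (hF : ContDiffOn ℝ 1 F (closedBall 0 1)) {x : E9}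
    (hx : x ∈ ball (0 : E9) 1) : HasFDerivAt F (fderivWithin ℝ F (closedBall 0 1) x) x :=
  ((hF.differentiableOn one_ne_zero x (ball_subset_closedBall hx)).hasFDerivWithinAt).hasFDerivAt
    (mem_of_superset (isOpen_ball.mem_nhds hx) ball_subset_closedBall)

lemma ibp (n : ℕ) (F : E9 → ℝ) (hF : ContDiffOn ℝ 1 F (closedBall 0 1)) (i : Fin 9) :
    ∫ x, (F x * (eta' n x * (-(2 * n * x i))) + dW F i x * eta n x) = 0 := by
  have hxi : Continuous fun x : E9 => x i := by fun_prop
  have i1 : Integrable fun x : E9 => F x * (eta' n x * (-(2 * n * x i))) := by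
    refine integrable_of_ball _ ?_ fun x hx => by simp [eta'_zero n x hx]
    refine hF.continuousOn.mul (Continuous.continuousOn ?_)
    have := eta'_cont n
    fun_prop
  have i2 : Integrable fun x : E9 => dW F i x * eta n x := by
    refine integrable_of_ball _ ?_ fun x hx => by simp [eta_zero n x hx]
    exact (dW_continuousOn hF i).mul (eta_cont n).continuousOn
  have i3 : Integrable fun x : E9 => F x * eta n x := by
    refine integrable_of_ball _ ?_ fun x hx => by simp [eta_zero n x hx]
    exact hF.continuousOn.mul (eta_cont n).continuousOn
  have key := integral_bilinear_hasLineDerivAt_right_eq_neg_left_of_integrable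
    (μ := (volume : Measure E9)) (B := ContinuousLinearMap.mul ℝ ℝ)
    (f := F) (g := eta n) (f' := dW F i) (g' := fun x => eta' n x * (-(2 * n * x i)))
    (v := EuclideanSpace.single i 1)
    (by simpa using i2) (by simpa using i1) (by simpa using i3)
    (fun x hx => (hasFDerivAt_of_ball hF (eta_tsupport n hx)).hasLineDerivAt _)
    (fun x _ => eta_lineDeriv n x i)
  simp only [ContinuousLinearMap.mul_apply'] at key
  rw [integral_add i1 i2, key]
  ring

lemma divergence_unit_ball (F : Fin 9 → E9 → ℝ) (hF : ∀ i, ContDiffOn ℝ 1 (F i) (closedBall 0 1))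
    (hb : ∀ x : E9, ‖x‖ = 1 → ∑ i, x i * F i x = 0) :
    ∫ x in ball (0 : E9) 1, ∑ i, dW (F i) i x = 0 := by
  obtain ⟨M, hM0, hM⟩ := theta_deriv_bound
  set G : E9 → ℝ := fun x => ∑ i, x i * F i x with hG
  have hGc : ContDiffOn ℝ 1 G (closedBall 0 1) := by
    refine ContDiffOn.sum fun i _ => ContDiffOn.mul ?_ (hF i)
    have : ContDiff ℝ 1 fun x : E9 => x i := by fun_prop
    exact this.contDiffOn
  obtain ⟨C, hC⟩ := hGc.exists_lipschitzOnWith one_ne_zero (convex_closedBall 0 1)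
    (isCompact_closedBall 0 1)
  have hGbound : ∀ x ∈ ball (0 : E9) 1, x ≠ 0 → |G x| ≤ C * (1 - ‖x‖ ^ 2) := by
    intro x hx hx0
    have hxn : 0 < ‖x‖ := norm_pos_iff.2 hx0
    have hx1 : ‖x‖ < 1 := mem_ball_zero_iff.1 hx
    set y : E9 := (‖x‖⁻¹) • x with hy
    have hyn : ‖y‖ = 1 := by rw [hy, norm_smul, norm_inv, norm_norm, inv_mul_cancel₀ hxn.ne']
    have h1 := hC.dist_le_mul x (ball_subset_closedBall hx) y (by simp [hyn])
    have h2 : G y = 0 := hb y hyn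
    rw [h2, Real.dist_eq, sub_zero] at h1
    have h3 : dist x y = 1 - ‖x‖ := by
      have : x - y = (1 - ‖x‖⁻¹) • x := by rw [hy, sub_smul, one_smul]
      rw [dist_eq_norm, this, norm_smul, Real.norm_eq_abs]
      have h4 : 1 - ‖x‖⁻¹ ≤ 0 := by
        have := (one_le_inv₀ hxn).2 hx1.le
        linarith
      rw [abs_of_nonpos h4]
      field_simp
      ring
    rw [h3] at h1
    refine h1.trans (mul_le_mul_of_nonneg_left ?_ C.2)
    nlinarith
  set D : E9 → ℝ := fun x => ∑ i, dW (F i) i x with hD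
  have hDc : ContinuousOn D (closedBall 0 1) :=
    continuousOn_finsetSum _ fun i _ => dW_continuousOn (hF i) i
  obtain ⟨A, hA⟩ := (isCompact_closedBall (0 : E9) 1).exists_bound_of_continuousOn hDc
  have hxi : ∀ i, Continuous fun x : E9 => x i := fun i => by fun_prop
  let Φ : ℕ → E9 → ℝ := fun n x => -(2 * n * eta' n x * G x) + eta n x * D x
  have hΦ0 : ∀ n, ∫ x in ball (0 : E9) 1, Φ n x = 0 := by
    intro n
    rw [setIntegral_eq_integral_of_forall_compl_eq_zero]
    · have e : ∀ x, Φ n x = ∑ i, (F i x * (eta' n x * (-(2 * n * x i))) + dW (F i) i x * eta n x) := by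
        intro x
        simp only [Φ, hG, hD, Finset.sum_add_distrib, Finset.mul_sum, ← Finset.sum_neg_distrib]
        congr 1 <;> exact Finset.sum_congr rfl fun i _ => by ring
      simp_rw [e]
      rw [integral_finsetSum]
      · exact Finset.sum_eq_zero fun i _ => ibp n (F i) (hF i) i
      · intro i _
        refine integrable_of_ball _ ?_ fun x hx => by simp [eta'_zero n x hx, eta_zero n x hx]
        have := eta'_cont n
        refine ((hF i).continuousOn.mul (Continuous.continuousOn ?_)).add
          ((dW_continuousOn (hF i) i).mul (eta_cont n).continuousOn)
        have := hxi i
        fun_prop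
    · intro x hx
      simp [Φ, eta'_zero n x hx, eta_zero n x hx]
  have hlim : Tendsto (fun n => ∫ x in ball (0 : E9) 1, Φ n x) atTop
      (nhds (∫ x in ball (0 : E9) 1, D x)) := by
    refine tendsto_integral_of_dominated_convergence (fun _ => 4 * M * C + A) ?_ ?_ ?_ ?_
    · intro n
      refine ContinuousOn.aestronglyMeasurable ?_ measurableSet_ball
      have hc1 := hGc.continuousOn.mono (ball_subset_closedBall (x := (0 : E9)))
      have hc2 := hDc.mono (ball_subset_closedBall (x := (0 : E9)))
      exact (((continuousOn_const.mul (eta'_cont n).continuousOn).mul hc1).neg).add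
        ((eta_cont n).continuousOn.mul hc2)
    · exact integrableOn_const (measure_ball_lt_top.ne)
    · intro n
      have hne : ∀ᵐ x : E9 ∂(volume.restrict (ball (0 : E9) 1)), x ≠ 0 := by
        refine ae_restrict_of_ae ?_
        exact Measure.ae_ne volume 0
      filter_upwards [ae_restrict_mem measurableSet_ball, hne] with x hx hx0
      have hAx : |D x| ≤ A := hA x (ball_subset_closedBall hx)
      have he1 : |eta n x * D x| ≤ A := by
        rw [abs_mul, show |eta n x| = eta n x from abs_of_nonneg (Real.smoothTransition.nonneg _)]
        exact (mul_le_of_le_one_left (abs_nonneg _) (Real.smoothTransition.le_one _)).trans hAx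
      have he2 : |2 * n * eta' n x * G x| ≤ 4 * M * C := by
        rcases lt_or_ge 1 ((n : ℝ) * (1 - ‖x‖ ^ 2) - 1) with h | h
        · have : eta' n x = 0 := theta_deriv_large _ h
          simp [this]; positivity
        · have hg := hGbound x hx hx0
          have hm := hM ((n : ℝ) * (1 - ‖x‖ ^ 2) - 1)
          have hn : (0 : ℝ) ≤ n := Nat.cast_nonneg n
          have hC0 : (0 : ℝ) ≤ C := C.2
          rw [abs_mul, abs_mul, abs_mul, abs_of_nonneg hn, abs_two]
          calc 2 * (n : ℝ) * |eta' n x| * |G x| ≤ 2 * n * M * (C * (1 - ‖x‖ ^ 2)) := by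
                refine mul_le_mul ?_ hg (abs_nonneg _) (by positivity)
                exact mul_le_mul_of_nonneg_left hm (by positivity)
            _ = 2 * M * C * (n * (1 - ‖x‖ ^ 2)) := by ring
            _ ≤ 2 * M * C * 2 := mul_le_mul_of_nonneg_left (by linarith) (by positivity)
            _ = 4 * M * C := by ring
      rw [Real.norm_eq_abs]
      refine (abs_add_le _ _).trans ?_
      rw [abs_neg]
      linarith
    · filter_upwards [ae_restrict_mem measurableSet_ball] with x hx
      have hx1 : ‖x‖ < 1 := mem_ball_zero_iff.1 hx
      have hp : 0 < 1 - ‖x‖ ^ 2 := by nlinarith [norm_nonneg x]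
      obtain ⟨N, hN⟩ := exists_nat_gt (2 / (1 - ‖x‖ ^ 2))
      refine tendsto_const_nhds.congr' ?_
      filter_upwards [eventually_ge_atTop N] with n hn
      have hn' : 2 / (1 - ‖x‖ ^ 2) < n := hN.trans_le (by exact_mod_cast hn)
      rw [div_lt_iff₀ hp] at hn'
      have h1 : eta' n x = 0 := theta_deriv_large _ (by linarith)
      have h2 : eta n x = 1 := Real.smoothTransition.one_of_one_le (by linarith)
      simp [Φ, h1, h2]
  simp_rw [hΦ0] at hlim
  exact (tendsto_nhds_unique hlim tendsto_const_nhds)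

lemma dW_eq {F : E9 → ℝ} (hF : ContDiffOn ℝ 1 F (closedBall 0 1)) {x : E9}
    (hx : x ∈ ball (0 : E9) 1) (i : Fin 9) :
    HasDerivAt (fun t : ℝ => F (x + t • EuclideanSpace.single i 1)) (dW F i x) 0 :=
  (hasFDerivAt_of_ball hF hx).hasLineDerivAt _

lemma lap_eq_dW (w w' : E9 → ℝ) (h : ∀ y ∈ ball (0 : E9) 1, w y = w' y) (x : E9)
    (hx : x ∈ ball (0 : E9) 1) : lap w x = ∑ i, dW (dW w' i) i x := by
  unfold lap
  refine Finset.sum_congr rfl fun i _ => ?_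
  have hK : ∀ y ∈ ball (0 : E9) 1, closedBall (0 : E9) 1 ∈ nhds y := fun y hy =>
    mem_of_superset (isOpen_ball.mem_nhds hy) ball_subset_closedBall
  have e : (fun y => fderiv ℝ w y (EuclideanSpace.single i 1)) =ᶠ[nhds x] dW w' i := by
    filter_upwards [isOpen_ball.mem_nhds hx] with y hy
    unfold dW
    rw [fderivWithin_of_mem_nhds (hK y hy)]
    have : w =ᶠ[nhds y] w' := by
      filter_upwards [isOpen_ball.mem_nhds hy] with t ht using h t ht
    rw [this.fderiv_eq]
  rw [e.fderiv_eq]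
  conv_rhs => unfold dW
  rw [fderivWithin_of_mem_nhds (hK x hx)]
  rfl

noncomputable def zz (x : E9) : ℝ := 4 * ‖x‖ ^ 2 + 1

lemma zz_pos (x : E9) : 0 < zz x := by unfold zz; positivity

lemma zz_line (x : E9) (i : Fin 9) :
    HasDerivAt (fun t : ℝ => zz (x + t • EuclideanSpace.single i 1)) (8 * x i) 0 := by
  have h1 : HasFDerivAt (fun x : E9 => ‖x‖ ^ 2) (2 • (innerSL ℝ x)) x :=
    (hasStrictFDerivAt_norm_sq x).hasFDerivAt
  have h2 : HasDerivAt (fun t : ℝ => ‖x + t • (EuclideanSpace.single i 1 : E9)‖ ^ 2)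
      ((2 • (innerSL ℝ x) : E9 →L[ℝ] ℝ) (EuclideanSpace.single i 1)) 0 := h1.hasLineDerivAt _
  rw [normsq_deriv] at h2
  have h3 := (h2.const_mul 4).add_const 1
  have e : 8 * x i = 4 * (2 * x i) := by ring
  rw [e]
  exact h3

lemma lev_line (L : List (ℤ × ℝ)) (x : E9) (i : Fin 9) :
    HasDerivAt (fun t : ℝ => lev L (zz (x + t • EuclideanSpace.single i 1)))
      (lev (lder L) (zz x) * (8 * x i)) 0 := by
  have h := lev_hasDerivAt L (zz x) (zz_pos x).ne'
  have e : zz x = zz (x + (0 : ℝ) • EuclideanSpace.single i 1) := by simp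
  rw [e] at h
  have := HasDerivAt.comp (0 : ℝ) h (zz_line x i)
  rw [← e] at this
  exact this

lemma coord_line (x : E9) (i : Fin 9) :
    HasDerivAt (fun t : ℝ => (x + t • (EuclideanSpace.single i 1 : E9)) i) 1 0 := by
  have : (fun t : ℝ => (x + t • (EuclideanSpace.single i 1 : E9)) i) = fun t => x i + t := by
    ext t; simp
  rw [this]
  simpa using (hasDerivAt_id (0 : ℝ)).const_add (x i)

lemma lev_zz_contDiff (L : List (ℤ × ℝ)) : ContDiff ℝ 1 fun x : E9 => lev L (zz x) := by
  have hz : ContDiff ℝ 1 zz := by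
    unfold zz
    exact (contDiff_const.mul (contDiff_norm_sq ℝ)).add contDiff_const
  rw [← contDiffOn_univ]
  exact (lev_contDiffOn L).comp hz.contDiffOn fun x _ => zz_pos x

lemma coord_contDiff (i : Fin 9) : ContDiff ℝ 1 fun x : E9 => x i := by fun_prop

lemma sum_sq (x : E9) : ∑ i, x i ^ 2 = ‖x‖ ^ 2 := by
  rw [EuclideanSpace.norm_sq_eq]; simp

noncomputable def vL (u : E9 → ℝ) (x : E9) : ℝ := ∑ i, dW (dW u i) i x

noncomputable def FF (lam : ℝ) (u : E9 → ℝ) (i : Fin 9) (y : E9) : ℝ :=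
  lev Lf (zz y) * dW (vL u) i y - vL u y * (8 * y i * lev (lder Lf) (zz y))
    + lev Lk (zz y) * dW u i y - u y * (8 * y i * lev (lder Lk) (zz y))
    - lam * (y i * lev Lg (zz y))

lemma vL_contDiffOn {u : E9 → ℝ} (hu : ContDiffOn ℝ 4 u (closedBall 0 1)) :
    ContDiffOn ℝ 2 (vL u) (closedBall 0 1) := by
  refine ContDiffOn.sum fun i _ => ?_
  have h3 : ContDiffOn ℝ (3 : ℕ∞) (dW u i) (closedBall 0 1) :=
    dW_contDiffOn (n := 4) (m := 3) hu (by norm_num) i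
  exact dW_contDiffOn (n := 3) (m := 2) h3 (by norm_num) i

lemma FF_contDiffOn (lam : ℝ) {u : E9 → ℝ} (hu : ContDiffOn ℝ 4 u (closedBall 0 1)) (i : Fin 9) :
    ContDiffOn ℝ 1 (FF lam u i) (closedBall 0 1) := by
  have hv := vL_contDiffOn hu
  have hv1 : ContDiffOn ℝ 1 (vL u) (closedBall 0 1) := hv.of_le (by norm_num)
  have hdv : ContDiffOn ℝ 1 (dW (vL u) i) (closedBall 0 1) :=
    dW_contDiffOn (n := 2) (m := 1) hv (by norm_num) i
  have hu1 : ContDiffOn ℝ 1 u (closedBall 0 1) := hu.of_le (by norm_num)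
  have hdu : ContDiffOn ℝ 1 (dW u i) (closedBall 0 1) :=
    dW_contDiffOn (n := 4) (m := 1) hu (by norm_num) i
  have hl : ∀ L, ContDiffOn ℝ 1 (fun x : E9 => lev L (zz x)) (closedBall 0 1) :=
    fun L => (lev_zz_contDiff L).contDiffOn
  have hc : ContDiffOn ℝ 1 (fun x : E9 => x i) (closedBall 0 1) := (coord_contDiff i).contDiffOn
  unfold FF
  exact (((((hl Lf).mul hdv).sub (hv1.mul ((contDiffOn_const.mul hc).mul (hl _)))).add
    ((hl Lk).mul hdu)).sub (hu1.mul ((contDiffOn_const.mul hc).mul (hl _)))).sub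
    (contDiffOn_const.mul (hc.mul (hl Lg)))

lemma dW_FF (lam : ℝ) {u : E9 → ℝ} (hu : ContDiffOn ℝ 4 u (closedBall 0 1)) (i : Fin 9)
    {x : E9} (hx : x ∈ ball (0 : E9) 1) :
    dW (FF lam u i) i x = lev Lf (zz x) * dW (dW (vL u) i) i x
      - vL u x * (8 * lev (lder Lf) (zz x) + 64 * x i ^ 2 * lev (lder (lder Lf)) (zz x))
      + lev Lk (zz x) * dW (dW u i) i x
      - u x * (8 * lev (lder Lk) (zz x) + 64 * x i ^ 2 * lev (lder (lder Lk)) (zz x))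
      - lam * (lev Lg (zz x) + 8 * x i ^ 2 * lev (lder Lg) (zz x)) := by
  have hv := vL_contDiffOn hu
  have hv1 : ContDiffOn ℝ 1 (vL u) (closedBall 0 1) := hv.of_le (by norm_num)
  have hdv : ContDiffOn ℝ 1 (dW (vL u) i) (closedBall 0 1) :=
    dW_contDiffOn (n := 2) (m := 1) hv (by norm_num) i
  have hu1 : ContDiffOn ℝ 1 u (closedBall 0 1) := hu.of_le (by norm_num)
  have hdu : ContDiffOn ℝ 1 (dW u i) (closedBall 0 1) :=
    dW_contDiffOn (n := 4) (m := 1) hu (by norm_num) i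
  have h0 := dW_eq (FF_contDiffOn lam hu i) hx i
  have hc := coord_line x i
  have h1 := (((((lev_line Lf x i).mul (dW_eq hdv hx i)).sub
    ((dW_eq hv1 hx i).mul ((hc.const_mul 8).mul (lev_line (lder Lf) x i)))).add
    ((lev_line Lk x i).mul (dW_eq hdu hx i))).sub
    ((dW_eq hu1 hx i).mul ((hc.const_mul 8).mul (lev_line (lder Lk) x i)))).sub
    ((hc.mul (lev_line Lg x i)).const_mul lam)
  rw [h0.unique h1]
  simp only [Pi.mul_apply, zero_smul, add_zero]
  ring

lemma div_FF (lam : ℝ) {u : E9 → ℝ} (hu : ContDiffOn ℝ 4 u (closedBall 0 1))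
    {x : E9} (hx : x ∈ ball (0 : E9) 1) :
    ∑ i, dW (FF lam u i) i x = lev Lf (zz x) * biharm u x
      - u x * (72 * lev (lder Lk) (zz x) + 16 * (zz x - 1) * lev (lder (lder Lk)) (zz x))
      - lam * (9 * lev Lg (zz x) + 2 * (zz x - 1) * lev (lder Lg) (zz x)) := by
  have hb : biharm u x = ∑ i, dW (dW (vL u) i) i x :=
    lap_eq_dW (lap u) (vL u) (fun y hy => lap_eq_dW u u (fun _ _ => rfl) y hy) x hx
  have hv : vL u x = ∑ i, dW (dW u i) i x := rfl
  have e : ∀ i, dW (FF lam u i) i x = lev Lf (zz x) * dW (dW (vL u) i) i x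
      + lev Lk (zz x) * dW (dW u i) i x
      + (-(8 * vL u x * lev (lder Lf) (zz x) + 8 * u x * lev (lder Lk) (zz x)
        + lam * lev Lg (zz x)))
      + (-(64 * vL u x * lev (lder (lder Lf)) (zz x) + 64 * u x * lev (lder (lder Lk)) (zz x)
        + 8 * lam * lev (lder Lg) (zz x))) * x i ^ 2 := by
    intro i; rw [dW_FF lam hu i hx]; ring
  simp_rw [e]
  rw [Finset.sum_add_distrib, Finset.sum_add_distrib, Finset.sum_add_distrib, ← Finset.mul_sum,
    ← Finset.mul_sum, ← Finset.mul_sum, ← hb, ← hv, sum_sq, Finset.sum_const, Finset.card_univ,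
    Fintype.card_fin, Lk_eq _ (zz_pos x)]
  have : ‖x‖ ^ 2 = (zz x - 1) / 4 := by unfold zz; ring
  rw [this]
  simp only [nsmul_eq_mul]
  push_cast
  ring

lemma FF_bdry (lam : ℝ) {u : E9 → ℝ} (hb : ∀ x : E9, ‖x‖ = 1 → u x = 0)
    (hd : ∀ x : E9, ‖x‖ = 1 → fderivWithin ℝ u (closedBall (0 : E9) 1) x x = 0)
    (x : E9) (hx : ‖x‖ = 1) : ∑ i, x i * FF lam u i x = 0 := by
  have hz : zz x = 5 := by unfold zz; rw [hx]; norm_num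
  have h1 : ∑ i, x i * dW u i x = 0 := by
    rw [← hd x hx]
    have hxs : x = ∑ i, x i • (EuclideanSpace.single i 1 : E9) := by
      ext j
      simp [Finset.sum_apply, Pi.single_apply]
    have hh := congrArg (fderivWithin ℝ u (closedBall (0 : E9) 1) x) hxs
    rw [map_sum] at hh
    refine Eq.trans ?_ hh.symm
    refine Finset.sum_congr rfl fun i _ => ?_
    rw [map_smul]; rfl
  have e : ∀ i, x i * FF lam u i x = lev Lk 5 * (x i * dW u i x) := by
    intro i
    unfold FF
    rw [hz, hb x hx, Lf_five, Lf'_five, Lg_five]; ring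
  simp_rw [e]
  rw [← Finset.mul_sum, h1, mul_zero]

/-- in dimension N = 9, the pull-in voltage satisfies λ* ≤ 366. -/
theorem pullIn_le_of_dim_nine :
    ∀ lam ∈ solSet 9, lam ≤ 366 := by
  rintro lam ⟨hlam, u, hu⟩
  by_contra hgt
  push Not at hgt
  have h0 := divergence_unit_ball (FF lam u) (FF_contDiffOn lam hu.contDiffOn)
    (FF_bdry lam hu.bdry hu.bdry_deriv)
  have hpt : ∀ x ∈ ball (0 : E9) 1, lam / 20000 ≤ ∑ i, dW (FF lam u i) i x := by
    intro x hx
    rw [div_FF lam hu.contDiffOn hx, hu.eqn x hx]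
    have hx1 : ‖x‖ < 1 := mem_ball_zero_iff.1 hx
    have hz1 : 1 ≤ zz x := by unfold zz; nlinarith [sq_nonneg ‖x‖]
    have hz5 : zz x ≤ 5 := by unfold zz; nlinarith [norm_nonneg x]
    have hf := Lf_nonneg _ (zz_pos x)
    have hs := sfun_nonneg _ (zz_pos x)
    have hpsi := ineq_psi _ hz1 hz5
    have hg := ineq_g _ hz1
    have hu0 := hu.pos x hx
    have ht : 0 < 1 - u x := by linarith [hu.lt_one x hx]
    set f := lev Lf (zz x)
    set s := sfun (zz x)
    set ψ := 72 * lev (lder Lk) (zz x) + 16 * (zz x - 1) * lev (lder (lder Lk)) (zz x)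
    set d := 9 * lev Lg (zz x) + 2 * (zz x - 1) * lev (lder Lg) (zz x)
    have hconv : 3 * s ^ 2 - 2 * (1 - u x) * s ^ 3 ≤ 1 / (1 - u x) ^ 2 := by
      rw [le_div_iff₀ (by positivity)]
      have hst : 0 ≤ s * (1 - u x) := by positivity
      nlinarith [mul_nonneg (sq_nonneg (1 - s * (1 - u x)))
        (by linarith : (0 : ℝ) ≤ 1 + 2 * (s * (1 - u x)))]
    have h1 : lam * f * (3 * s ^ 2 - 2 * (1 - u x) * s ^ 3) ≤ f * (lam / (1 - u x) ^ 2) := by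
      have := mul_le_mul_of_nonneg_left hconv (by positivity : 0 ≤ lam * f)
      calc _ ≤ _ := this
        _ = _ := by ring
    have h2 : u x * ψ ≤ u x * (2 * lam * f * s ^ 3) := by
      refine mul_le_mul_of_nonneg_left (hpsi.trans ?_) hu0.le
      have : 0 ≤ f * s ^ 3 := by positivity
      nlinarith
    have h3 := mul_le_mul_of_nonneg_left hg hlam.le
    nlinarith
  have hint : IntegrableOn (fun x => ∑ i, dW (FF lam u i) i x) (ball (0 : E9) 1) := by
    have hc : ContinuousOn (fun x => ∑ i, dW (FF lam u i) i x) (closedBall (0 : E9) 1) :=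
      continuousOn_finsetSum _ fun i _ => dW_continuousOn (FF_contDiffOn lam hu.contDiffOn i) i
    exact (hc.integrableOn_compact (isCompact_closedBall _ _)).mono_set ball_subset_closedBall
  have hle := setIntegral_mono_on (μ := (volume : Measure E9)) (s := ball (0 : E9) 1)
    (f := fun _ => lam / 20000) (integrableOn_const measure_ball_lt_top.ne) hint
    measurableSet_ball hpt
  rw [h0, setIntegral_const, smul_eq_mul] at hle
  have hvol : 0 < (volume : Measure E9).real (ball (0 : E9) 1) :=
    ENNReal.toReal_pos (measure_ball_pos _ _ one_pos).ne' measure_ball_lt_top.ne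
  have : 0 < (volume : Measure E9).real (ball (0 : E9) 1) * (lam / 20000) := by positivity
  linarith
end
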